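/- arXiv:1505.00386 — 4 statements merged into one kernel-verified Lean document; each statement's English description precedes it below -/
import Mathlib

section
/- Let m ≥ 1 be an integer and set q = max{3m−1, m+3}. Let F = F_p(L_1,…,L_q) be a fat q-path (where the joining construction is applied even though q may be less than 5), let K be a nonempty clique with V(F) ∩ K = ∅, and let F′ be the graph obtained from the disjoint union of F and K by joining each vertex of K to each vertex of L_{max{m−1,1}} ∪ L_{max{m,2}} ∪ L_{max{2m,3}} ∪ L_{max{2m+1,4}}. Then F′ is a connected {K_{1,3}, B_{1,m}}-free graph that contains P_q as an induced subgraph, and F′ is neither a fat path nor a fat cycle. -/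
open SimpleGraph

def graphOfList (n : ℕ) (E : List (Fin n × Fin n)) : SimpleGraph (Fin n) :=
  SimpleGraph.fromRel (fun a b => (a, b) ∈ E)

/-- The claw `K_{1,3}`, with center `0`. -/
def K13 : SimpleGraph (Fin 4) := graphOfList 4 [(0,1), (0,2), (0,3)]

/-- `B_{1,m} = N_{1,m,0}`: a triangle `0,1,2`, a pendant vertex `3` attached to `0`,
and a path `4,5,…,m+3` of length `m` attached at the vertex `1`. -/
def Bgraph (m : ℕ) : SimpleGraph (Fin (m + 4)) :=
  SimpleGraph.fromRel (fun a b =>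
    (a.val = 0 ∧ b.val = 1) ∨ (a.val = 0 ∧ b.val = 2) ∨ (a.val = 1 ∧ b.val = 2) ∨
    (a.val = 0 ∧ b.val = 3) ∨ (a.val = 1 ∧ b.val = 4) ∨
    (4 ≤ a.val ∧ b.val = a.val + 1))

/-- `G` contains `H` as an induced subgraph. -/
def ContainsInduced {V W : Type*} (G : SimpleGraph V) (H : SimpleGraph W) : Prop :=
  Nonempty (H ↪g G)

/-- The cliques `L 0, …, L (l-1)` form an (induced) fat `l`-path decomposition:
they are nonempty, pairwise disjoint, and two distinct vertices lying in them are adjacent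
iff they lie in the same clique or in consecutive cliques. -/
def IsFatPathDecomp {V : Type*} (G : SimpleGraph V) (l : ℕ) (L : Fin l → Set V) : Prop :=
  (∀ i, (L i).Nonempty) ∧
  (∀ i j, i ≠ j → Disjoint (L i) (L j)) ∧
  (∀ (i j : Fin l) (u v : V), u ∈ L i → v ∈ L j → u ≠ v →
    (G.Adj u v ↔ i = j ∨ (i : ℕ) + 1 = (j : ℕ) ∨ (j : ℕ) + 1 = (i : ℕ)))

/-- The cliques `L 0, …, L l` form an (induced) fat `l`-cycle decomposition:
they are nonempty, pairwise disjoint, and two distinct vertices lying in them are adjacent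
iff they lie in the same clique or in (cyclically) consecutive cliques. -/
def IsFatCycleDecomp {V : Type*} (G : SimpleGraph V) (l : ℕ) (L : Fin (l + 1) → Set V) : Prop :=
  (∀ i, (L i).Nonempty) ∧
  (∀ i j, i ≠ j → Disjoint (L i) (L j)) ∧
  (∀ (i j : Fin (l + 1)) (u v : V), u ∈ L i → v ∈ L j → u ≠ v →
    (G.Adj u v ↔ i = j ∨ ((i : ℕ) + 1) % (l + 1) = (j : ℕ) ∨ ((j : ℕ) + 1) % (l + 1) = (i : ℕ)))

/-- `G` is a fat `l`-path (so `l ≥ 5` and the fundamental cliques cover `G`). -/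
def IsFatPath {V : Type*} (G : SimpleGraph V) (l : ℕ) : Prop :=
  5 ≤ l ∧ ∃ L : Fin l → Set V, IsFatPathDecomp G l L ∧ ∀ v : V, ∃ i, v ∈ L i

/-- `G` is a fat `l`-cycle (so `l ≥ 5` and the `l+1` fundamental cliques cover `G`). -/
def IsFatCycle {V : Type*} (G : SimpleGraph V) (l : ℕ) : Prop :=
  5 ≤ l ∧ ∃ L : Fin (l + 1) → Set V, IsFatCycleDecomp G l L ∧ ∀ v : V, ∃ i, v ∈ L i

/-- `G` belongs to the family `𝒫(p)` of all fat `i`-paths and fat `i`-cycles with `i ≥ p`. -/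
def MemFatFamily {V : Type*} (G : SimpleGraph V) (p : ℕ) : Prop :=
  ∃ l, p ≤ l ∧ (IsFatPath G l ∨ IsFatCycle G l)

/-- The fundamental clique with (1-based) index `n`, i.e. the paper's `L_n`
(empty when `n ∉ {1, …, l}`). -/
def cliqueAt {V : Type*} {l : ℕ} (L : Fin l → Set V) (n : ℕ) : Set V :=
  {v | ∃ i : Fin l, (i : ℕ) + 1 = n ∧ v ∈ L i}

def RR (a c x y : ℕ) : Prop :=
  (x = 0 ∧ y = 0) ∨ (x = 0 ∧ (y = a ∨ y = a + 1 ∨ y = c ∨ y = c + 1)) ∨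
  (y = 0 ∧ (x = a ∨ x = a + 1 ∨ x = c ∨ x = c + 1)) ∨
  (1 ≤ x ∧ 1 ≤ y ∧ x ≤ y + 1 ∧ y ≤ x + 1)

theorem exists_pos {V : Type*} (q a c : ℕ) (ha : 1 ≤ a) (hc : 1 ≤ c) (G : SimpleGraph V)
    (L : Fin q → Set V) (K : Set V)
    (hLne : ∀ i, (L i).Nonempty)
    (hLdisj : ∀ i j, i ≠ j → Disjoint (L i) (L j))
    (hKne : K.Nonempty)
    (hKdisj : ∀ i, Disjoint K (L i))
    (hcover : ∀ v : V, v ∈ K ∨ ∃ i, v ∈ L i)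
    (hadj : ∀ u v : V, u ≠ v → (G.Adj u v ↔
      (∃ i j : Fin q, u ∈ L i ∧ v ∈ L j ∧
        (i = j ∨ (i : ℕ) + 1 = (j : ℕ) ∨ (j : ℕ) + 1 = (i : ℕ))) ∨
      (u ∈ K ∧ v ∈ K) ∨
      (u ∈ K ∧ v ∈ cliqueAt L a ∪ cliqueAt L (a + 1) ∪
        cliqueAt L c ∪ cliqueAt L (c + 1)) ∨
      (v ∈ K ∧ u ∈ cliqueAt L a ∪ cliqueAt L (a + 1) ∪
        cliqueAt L c ∪ cliqueAt L (c + 1)))) :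
    ∃ p : V → ℕ, (∀ v, p v ≤ q) ∧ (∀ n ≤ q, ∃ v, p v = n) ∧
      ∀ u v, u ≠ v → (G.Adj u v ↔ RR a c (p u) (p v)) := by
  classical
  have hp : ∀ v, ∃ n, n ≤ q ∧ (v ∈ K ↔ n = 0) ∧ ∀ i : Fin q, v ∈ L i ↔ n = i + 1 := by
    intro v
    rcases hcover v with h | ⟨i, h⟩
    · refine ⟨0, by omega, by simp [h], fun i => ?_⟩
      have := Set.disjoint_left.1 (hKdisj i) h
      simp [this]
    · refine ⟨i + 1, by omega, ?_, fun j => ?_⟩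
      · have : v ∉ K := fun hk => Set.disjoint_left.1 (hKdisj i) hk h
        simp [this]
      · constructor
        · intro hj
          by_contra hne
          exact Set.disjoint_left.1 (hLdisj i j (fun e => hne (by rw [e]))) h hj
        · intro e
          have : i = j := Fin.ext (by omega)
          exact this ▸ h
  choose p hpq hpK hpL using hp
  refine ⟨p, hpq, ?_, ?_⟩
  · intro n hn
    rcases n with _ | n
    · obtain ⟨v, hv⟩ := hKne
      exact ⟨v, (hpK v).1 hv⟩
    · obtain ⟨v, hv⟩ := hLne ⟨n, hn⟩
      exact ⟨v, (hpL v _).1 hv⟩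
  · intro u v huv
    have hcl : ∀ n, 1 ≤ n → ∀ w, w ∈ cliqueAt L n ↔ p w = n := by
      intro n hn w
      simp only [cliqueAt, Set.mem_ofPred_eq, hpL]
      constructor
      · rintro ⟨i, h1, h2⟩; omega
      · intro h
        have := hpq w
        exact ⟨⟨n - 1, by omega⟩, by simp; omega, by simp; omega⟩
    have hfirst : (∃ i j : Fin q, u ∈ L i ∧ v ∈ L j ∧
        (i = j ∨ (i : ℕ) + 1 = (j : ℕ) ∨ (j : ℕ) + 1 = (i : ℕ))) ↔
        (1 ≤ p u ∧ 1 ≤ p v ∧ p u ≤ p v + 1 ∧ p v ≤ p u + 1) := by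
      simp only [hpL, Fin.ext_iff]
      constructor
      · rintro ⟨i, j, h1, h2, h3⟩; omega
      · intro h
        have h1 := hpq u
        have h2 := hpq v
        exact ⟨⟨p u - 1, by omega⟩, ⟨p v - 1, by omega⟩, by simp; omega, by simp; omega,
          by simp; omega⟩
    rw [hadj u v huv, hfirst]
    simp only [Set.mem_union, hcl a ha, hcl (a+1) (by omega), hcl c hc, hcl (c+1) (by omega), hpK,
      RR]
    omega

theorem conn_aux {V : Type*} (q a c : ℕ) (ha : 1 ≤ a) (hq : c + 1 ≤ q) (hac : a + 2 ≤ c)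
    (G : SimpleGraph V)
    (p : V → ℕ) (hpq : ∀ v, p v ≤ q) (hps : ∀ n ≤ q, ∃ v, p v = n)
    (hadj : ∀ u v, u ≠ v → (G.Adj u v ↔ RR a c (p u) (p v))) : G.Connected := by
  have hr : ∀ u v, RR a c (p u) (p v) → G.Reachable u v := by
    intro u v h
    by_cases e : u = v
    · subst e; exact Reachable.refl _
    · exact ((hadj u v e).2 h).reachable
  obtain ⟨w, hw⟩ := hps 1 (by omega)
  have h1 : ∀ n, ∀ v, p v = n + 1 → G.Reachable v w := by
    intro n
    induction n with
    | zero => intro v hv; exact hr _ _ (by unfold RR; omega)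
    | succ n ih =>
      intro v hv
      obtain ⟨x, hx⟩ := hps (n + 1) (by have := hpq v; omega)
      exact (hr v x (by unfold RR; omega)).trans (ih x hx)
  have h2 : ∀ v, G.Reachable v w := by
    intro v
    by_cases hv : p v = 0
    · obtain ⟨x, hx⟩ := hps a (by omega)
      exact (hr v x (by unfold RR; omega)).trans (h1 (a - 1) x (by omega))
    · exact h1 (p v - 1) v (by omega)
  have : Nonempty V := ⟨w⟩
  exact ⟨fun u v => (h2 u).trans (h2 v).symm⟩

theorem RR_pp {a c x y : ℕ} (hx : 0 < x) (hy : 0 < y) :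
    RR a c x y ↔ x ≤ y + 1 ∧ y ≤ x + 1 := by unfold RR; omega

theorem RR_zp {a c y : ℕ} (hy : 0 < y) :
    RR a c 0 y ↔ (y = a ∨ y = a + 1 ∨ y = c ∨ y = c + 1) := by unfold RR; omega

theorem RR_pz {a c y : ℕ} (hy : 0 < y) :
    RR a c y 0 ↔ (y = a ∨ y = a + 1 ∨ y = c ∨ y = c + 1) := by unfold RR; omega

theorem RR_zz {a c : ℕ} : RR a c 0 0 := by unfold RR; omega

theorem claw_arith (a c x y z w : ℕ) (ha : 1 ≤ a) (hac : a + 2 ≤ c)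
    (h1 : RR a c x y) (h2 : RR a c x z) (h3 : RR a c x w)
    (h4 : ¬ RR a c y z) (h5 : ¬ RR a c y w) (h6 : ¬ RR a c z w) : False := by
  rcases Nat.eq_zero_or_pos x with rfl | hx <;>
  rcases Nat.eq_zero_or_pos y with rfl | hy <;>
  rcases Nat.eq_zero_or_pos z with rfl | hz <;>
  rcases Nat.eq_zero_or_pos w with rfl | hw <;>
  first
  | exact h4 RR_zz
  | exact h5 RR_zz
  | exact h6 RR_zz
  | (simp only [RR_pp, RR_zp, RR_pz, RR_zz, *] at h1 h2 h3 h4 h5 h6 <;> omega)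

theorem emb_adj {V W : Type*} {a c : ℕ} {G : SimpleGraph V} {H : SimpleGraph W}
    {p : V → ℕ} (hadj : ∀ u v, u ≠ v → (G.Adj u v ↔ RR a c (p u) (p v)))
    (f : H ↪g G) (i j : W) (h : i ≠ j) : H.Adj i j ↔ RR a c (p (f i)) (p (f j)) := by
  rw [← hadj _ _ (fun e => h (f.injective e)), f.map_adj_iff]

theorem claw_aux {V : Type*} (a c : ℕ) (ha : 1 ≤ a) (hac : a + 2 ≤ c)
    (G : SimpleGraph V) (p : V → ℕ)
    (hadj : ∀ u v, u ≠ v → (G.Adj u v ↔ RR a c (p u) (p v))) : ¬ ContainsInduced G K13 := by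
  rintro ⟨f⟩
  have h := emb_adj hadj f
  refine claw_arith a c _ _ _ _ ha hac
    ((h 0 1 (by decide)).1 ?_) ((h 0 2 (by decide)).1 ?_) ((h 0 3 (by decide)).1 ?_)
    ((h 1 2 (by decide)).not.1 ?_) ((h 1 3 (by decide)).not.1 ?_)
    ((h 2 3 (by decide)).not.1 ?_) <;> simp [K13, graphOfList]

theorem path_aux {V : Type*} (q a c : ℕ)
    (G : SimpleGraph V) (p : V → ℕ) (hps : ∀ n ≤ q, ∃ v, p v = n)
    (hadj : ∀ u v, u ≠ v → (G.Adj u v ↔ RR a c (p u) (p v))) :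
    ContainsInduced G (SimpleGraph.pathGraph q) := by
  have : ∀ i : Fin q, ∃ v, p v = i + 1 := fun i => hps _ (by omega)
  choose g hg using this
  have hinj : Function.Injective g := by
    intro i j e
    have h1 := hg i
    have h2 := hg j
    rw [e] at h1
    exact Fin.ext (by omega)
  refine ⟨⟨⟨g, hinj⟩, ?_⟩⟩
  intro i j
  simp only [Function.Embedding.coeFn_mk]
  by_cases e : i = j
  · subst e; simp
  · have e' : (i : ℕ) ≠ j := fun h => e (Fin.ext h)
    rw [hadj _ _ (fun h => e (hinj h)), pathGraph_adj, hg, hg]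
    unfold RR
    omega

theorem tri_aux {V : Type*} (q a c : ℕ) (ha : 1 ≤ a) (hq : c + 1 ≤ q) (hac : a + 2 ≤ c)
    (G : SimpleGraph V) (p : V → ℕ) (hps : ∀ n ≤ q, ∃ v, p v = n)
    (hadj : ∀ u v, u ≠ v → (G.Adj u v ↔ RR a c (p u) (p v))) :
    ∃ x y z : V, G.Adj x y ∧ G.Adj x z ∧ G.Adj y z ∧
      (∃ w, w ≠ x ∧ w ≠ y ∧ ¬ (G.Adj w x ↔ G.Adj w y)) ∧
      (∃ w, w ≠ x ∧ w ≠ z ∧ ¬ (G.Adj w x ↔ G.Adj w z)) ∧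
      (∃ w, w ≠ y ∧ w ≠ z ∧ ¬ (G.Adj w y ↔ G.Adj w z)) := by
  obtain ⟨x, hx⟩ := hps 0 (by omega)
  obtain ⟨y, hy⟩ := hps a (by omega)
  obtain ⟨z, hz⟩ := hps (a + 1) (by omega)
  obtain ⟨d, hd⟩ := hps (c + 1) (by omega)
  obtain ⟨e, he⟩ := hps (a + 2) (by omega)
  have ne : ∀ u v, p u ≠ p v → u ≠ v := fun u v h e => h (by rw [e])
  have A : ∀ u v, p u ≠ p v → (G.Adj u v ↔ RR a c (p u) (p v)) :=
    fun u v h => hadj u v (ne u v h)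
  refine ⟨x, y, z, (A _ _ (by omega)).2 ?_, (A _ _ (by omega)).2 ?_, (A _ _ (by omega)).2 ?_,
    ⟨d, ne _ _ (by omega), ne _ _ (by omega), ?_⟩,
    ⟨d, ne _ _ (by omega), ne _ _ (by omega), ?_⟩,
    ⟨e, ne _ _ (by omega), ne _ _ (by omega), ?_⟩⟩
  · unfold RR; omega
  · unfold RR; omega
  · unfold RR; omega
  · rw [A _ _ (by omega), A _ _ (by omega)]; unfold RR; omega
  · rw [A _ _ (by omega), A _ _ (by omega)]; unfold RR; omega
  · rw [A _ _ (by omega), A _ _ (by omega)]; unfold RR; omega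

theorem nofat {V ι : Type*} (G : SimpleGraph V) (T : ι → ι → Prop) (L : ι → Set V)
    (hT : ∀ i j k, i ≠ j → i ≠ k → j ≠ k → T i j → T i k → T j k → False)
    (h : ∀ i j u v, u ∈ L i → v ∈ L j → u ≠ v → (G.Adj u v ↔ T i j))
    (hcov : ∀ v, ∃ i, v ∈ L i)
    (htri : ∃ x y z : V, G.Adj x y ∧ G.Adj x z ∧ G.Adj y z ∧
      (∃ w, w ≠ x ∧ w ≠ y ∧ ¬ (G.Adj w x ↔ G.Adj w y)) ∧
      (∃ w, w ≠ x ∧ w ≠ z ∧ ¬ (G.Adj w x ↔ G.Adj w z)) ∧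
      (∃ w, w ≠ y ∧ w ≠ z ∧ ¬ (G.Adj w y ↔ G.Adj w z))) : False := by
  obtain ⟨x, y, z, hxy, hxz, hyz, h1, h2, h3⟩ := htri
  have key : ∀ x y i j, x ∈ L i → y ∈ L j →
      (∃ w, w ≠ x ∧ w ≠ y ∧ ¬ (G.Adj w x ↔ G.Adj w y)) → i ≠ j := by
    rintro x y i j hx hy ⟨w, h1, h2, h3⟩ rfl
    obtain ⟨k, hk⟩ := hcov w
    exact h3 ((h k i w x hk hx h1).trans (h k i w y hk hy h2).symm)
  obtain ⟨i, hi⟩ := hcov x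
  obtain ⟨j, hj⟩ := hcov y
  obtain ⟨k, hk⟩ := hcov z
  exact hT i j k (key _ _ _ _ hi hj h1) (key _ _ _ _ hi hk h2) (key _ _ _ _ hj hk h3)
    ((h _ _ _ _ hi hj hxy.ne).1 hxy) ((h _ _ _ _ hi hk hxz.ne).1 hxz)
    ((h _ _ _ _ hj hk hyz.ne).1 hyz)

theorem mod_aux (n i j : ℕ) (hi : i < n) (h : (i + 1) % n = j) :
    i + 1 = j ∨ (i + 1 = n ∧ j = 0) := by
  rcases Nat.lt_or_ge (i + 1) n with h1 | h1
  · rw [Nat.mod_eq_of_lt h1] at h; exact Or.inl h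
  · have : i + 1 = n := by omega
    rw [this, Nat.mod_self] at h
    exact Or.inr ⟨this, h.symm⟩

theorem line_aux (n : ℕ) (g : ℕ → ℕ) (h1 : ∀ i, i + 1 ≤ n → g (i + 1) = g i + 1 ∨ g i = g (i + 1) + 1)
    (h2 : ∀ i, i + 2 ≤ n → g (i + 2) ≠ g i) :
    (∀ i ≤ n, g i = g 0 + i) ∨ (∀ i ≤ n, g i + i = g 0) := by
  by_cases hn : n = 0
  · subst hn; left; intro i hi; have : i = 0 := by omega
    subst this; rfl
  rcases h1 0 (by omega) with h | h
  · left
    have : ∀ i, i + 1 ≤ n → g i = g 0 + i ∧ g (i + 1) = g 0 + (i + 1) := by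
      intro i
      induction i with
      | zero => intro _; simpa using h
      | succ i ih =>
        intro hi
        have := ih (by omega)
        have h3 : g (i + 2) = g (i + 1) + 1 ∨ g (i + 1) = g (i + 2) + 1 := h1 (i + 1) hi
        have h4 := h2 i hi
        have e : i + 1 + 1 = i + 2 := rfl
        rw [e]
        omega
    intro i hi
    rcases i with _ | i
    · rfl
    · exact (this i hi).2
  · right
    have : ∀ i, i + 1 ≤ n → g i + i = g 0 ∧ g (i + 1) + (i + 1) = g 0 := by
      intro i
      induction i with
      | zero => intro _; exact ⟨rfl, h.symm⟩
      | succ i ih =>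
        intro hi
        have := ih (by omega)
        have h3 : g (i + 2) = g (i + 1) + 1 ∨ g (i + 1) = g (i + 2) + 1 := h1 (i + 1) hi
        have h4 := h2 i hi
        have e : i + 1 + 1 = i + 2 := rfl
        rw [e]
        omega
    intro i hi
    rcases i with _ | i
    · rfl
    · exact (this i hi).2

theorem bull_arith (y0 y1 y2 y3 z : ℕ)
    (b0 : y0 ≤ 4) (b1 : y1 ≤ 4) (b2 : y2 ≤ 4) (b3 : y3 ≤ 4) (bz : z ≤ 4)
    (h01 : RR 1 3 y0 y1) (h02 : RR 1 3 y0 y2) (h12 : RR 1 3 y1 y2) (h03 : RR 1 3 y0 y3)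
    (h1z : RR 1 3 y1 z) (h0z : ¬ RR 1 3 y0 z) (h13 : ¬ RR 1 3 y1 y3) (h23 : ¬ RR 1 3 y2 y3)
    (h2z : ¬ RR 1 3 y2 z) : False := by
  have key : ∀ u v, u ≤ 4 → v ≤ 4 → ¬ RR 1 3 u v → 0 < u ∧ 0 < v := by
    intro u v hu hv h
    unfold RR at h
    omega
  have k1 := key _ _ b0 bz h0z
  have k2 := key _ _ b1 b3 h13
  have k3 := key _ _ b2 b3 h23
  rw [RR_pp k1.1 k1.2] at h0z
  rw [RR_pp k2.1 k2.2] at h13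
  rw [RR_pp k3.1 k3.2] at h23
  rw [RR_pp k3.1 k1.2] at h2z
  rw [RR_pp k1.1 k2.1] at h01
  rw [RR_pp k1.1 k3.1] at h02
  rw [RR_pp k2.1 k3.1] at h12
  rw [RR_pp k1.1 k2.2] at h03
  rw [RR_pp k2.1 k1.2] at h1z
  omega

theorem tri_arith (a c y0 y1 y2 : ℕ) (h1 : 1 ≤ a) (hac : a + 3 ≤ c)
    (n1 : y0 ≠ y1) (n2 : y0 ≠ y2) (n3 : y1 ≠ y2)
    (h01 : RR a c y0 y1) (h02 : RR a c y0 y2) (h12 : RR a c y1 y2) :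
    ∃ e, (e = a ∨ e = c) ∧ ((y0 = 0 ∧ y1 = e ∧ y2 = e + 1) ∨ (y0 = 0 ∧ y1 = e + 1 ∧ y2 = e) ∨
      (y0 = e ∧ y1 = 0 ∧ y2 = e + 1) ∨ (y0 = e + 1 ∧ y1 = 0 ∧ y2 = e) ∨
      (y0 = e ∧ y1 = e + 1 ∧ y2 = 0) ∨ (y0 = e + 1 ∧ y1 = e ∧ y2 = 0)) := by
  have key : ∀ u v, 0 < u → 0 < v → u ≠ v → RR a c 0 u → RR a c 0 v → RR a c u v →
      ∃ e, (e = a ∨ e = c) ∧ ((u = e ∧ v = e + 1) ∨ (u = e + 1 ∧ v = e)) := by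
    intro u v hu hv huv p1 p2 p3
    rw [RR_zp hu] at p1
    rw [RR_zp hv] at p2
    rw [RR_pp hu hv] at p3
    by_cases h : u ≤ a + 1
    · exact ⟨a, Or.inl rfl, by omega⟩
    · exact ⟨c, Or.inr rfl, by omega⟩
  have comm : ∀ x y, RR a c x y → RR a c y x := by
    intro x y; unfold RR; omega
  rcases Nat.eq_zero_or_pos y0 with rfl | p0
  · obtain ⟨e, he, h⟩ := key y1 y2 (by omega) (by omega) n3 h01 h02 h12
    exact ⟨e, he, by omega⟩
  rcases Nat.eq_zero_or_pos y1 with rfl | p1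
  · obtain ⟨e, he, h⟩ := key y0 y2 (by omega) (by omega) n2 (comm _ _ h01) h12 h02
    exact ⟨e, he, by omega⟩
  rcases Nat.eq_zero_or_pos y2 with rfl | p2
  · obtain ⟨e, he, h⟩ := key y0 y1 (by omega) (by omega) n1 (comm _ _ h02) (comm _ _ h12) h01
    exact ⟨e, he, by omega⟩
  exfalso
  rw [RR_pp p0 p1] at h01
  rw [RR_pp p0 p2] at h02
  rw [RR_pp p1 p2] at h12
  omega

theorem RR_ne {a c x y w : ℕ} (h : RR a c w x) (h' : ¬ RR a c w y) : x ≠ y := by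
  rintro rfl; exact h' h

theorem RR_comm {a c x y : ℕ} : RR a c x y ↔ RR a c y x := by
  unfold RR; omega

theorem RR_refl {a c x : ℕ} : RR a c x x := by
  unfold RR; omega

theorem b_aux {V : Type*} (m : ℕ) (hm : 2 ≤ m)
    (G : SimpleGraph V) (p : V → ℕ) (hpq : ∀ v, p v ≤ 3 * m - 1)
    (hadj : ∀ u v, u ≠ v → (G.Adj u v ↔ RR (m - 1) (2 * m) (p u) (p v))) :
    ¬ ContainsInduced G (Bgraph m) := by
  rintro ⟨f⟩
  have h := emb_adj hadj f
  obtain ⟨y, hy⟩ : ∃ y : ℕ → ℕ, ∀ i (hi : i < m + 4), y i = p (f ⟨i, hi⟩) :=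
    ⟨fun i => if hi : i < m + 4 then p (f ⟨i, hi⟩) else 0, fun i hi => by simp [hi]⟩
  have hb : ∀ i, i < m + 4 → y i ≤ 3 * m - 1 := fun i hi => by rw [hy i hi]; exact hpq _
  have hB : ∀ i j, i < j → j < m + 4 → (RR (m - 1) (2 * m) (y i) (y j) ↔
      ((i = 0 ∧ j = 1) ∨ (i = 0 ∧ j = 2) ∨ (i = 1 ∧ j = 2) ∨
    (i = 0 ∧ j = 3) ∨ (i = 1 ∧ j = 4) ∨ (4 ≤ i ∧ j = i + 1))) := by
    intro i j hij hj
    rw [hy i (by omega), hy j hj, ← h _ _ (by simp; omega)]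
    simp only [Bgraph, SimpleGraph.fromRel_adj, ne_eq, Fin.mk.injEq]
    omega
  have h01 := (hB 0 1 (by omega) (by omega)).2 (by omega)
  have h02 := (hB 0 2 (by omega) (by omega)).2 (by omega)
  have h12 := (hB 1 2 (by omega) (by omega)).2 (by omega)
  have h03 := (hB 0 3 (by omega) (by omega)).2 (by omega)
  have h14 := (hB 1 4 (by omega) (by omega)).2 (by omega)
  have h04 := (hB 0 4 (by omega) (by omega)).not.2 (by omega)
  have h13 := (hB 1 3 (by omega) (by omega)).not.2 (by omega)
  have h23 := (hB 2 3 (by omega) (by omega)).not.2 (by omega)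
  have h24 := (hB 2 4 (by omega) (by omega)).not.2 (by omega)
  have n01 : y 0 ≠ y 1 := RR_ne (RR_comm.1 h03) (fun h => h13 (RR_comm.1 h))
  have n02 : y 0 ≠ y 2 := RR_ne (RR_comm.1 h03) (fun h => h23 (RR_comm.1 h))
  have n12 : y 1 ≠ y 2 := RR_ne (RR_comm.1 h14) (fun h => h24 (RR_comm.1 h))
  have T := tri_arith (m - 1) (2 * m) _ _ _ (by omega) (by omega) n01 n02 n12 h01 h02 h12
  have T' : y 0 = 0 ∨ y 1 = 0 ∨ y 2 = 0 := by
    obtain ⟨e, he, T⟩ := T; omega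
  have n14 : y 1 ≠ y 4 := RR_ne h01 h04
  have ne_of : ∀ i j, i < j → j < m + 4 → ¬ RR (m - 1) (2 * m) (y i) (y j) → y i ≠ y j := by
    intro i j _ _ h e; exact h (e ▸ RR_refl)
  have n04 := ne_of 0 4 (by omega) (by omega) h04
  have n24 := ne_of 2 4 (by omega) (by omega) h24
  have p0 : ∀ i, 5 ≤ i → i < m + 4 → ¬ RR (m - 1) (2 * m) (y 0) (y i) ∧
      ¬ RR (m - 1) (2 * m) (y 1) (y i) ∧ ¬ RR (m - 1) (2 * m) (y 2) (y i) := by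
    intro i h5 hi
    refine ⟨(hB _ _ (by omega) hi).not.2 (by omega), (hB _ _ (by omega) hi).not.2 (by omega),
      (hB _ _ (by omega) hi).not.2 (by omega)⟩
  have pos : ∀ i, 4 ≤ i → i < m + 4 → 1 ≤ y i := by
    intro i h4 hi
    by_cases e : i = 4
    · subst e; omega
    · obtain ⟨q0, q1, q2⟩ := p0 i (by omega) hi
      have := ne_of 0 i (by omega) hi q0
      have := ne_of 1 i (by omega) hi q1
      have := ne_of 2 i (by omega) hi q2
      omega
  have n2 : ∀ i, 4 ≤ i → i + 2 < m + 4 → ¬ RR (m - 1) (2 * m) (y i) (y (i + 2)) :=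
    fun i h4 hi => (hB _ _ (by omega) hi).not.2 (by omega)
  have line := line_aux (m - 1) (fun i => y (i + 4)) (by
    intro i hi
    have a1 := (hB (i + 4) (i + 5) (by omega) (by omega)).2 (by omega)
    have a2 : y (i + 4) ≠ y (i + 5) := by
      rcases i with _ | i
      · exact RR_ne h14 (p0 5 (by omega) (by omega)).2.1
      · exact RR_ne ((hB (i + 4) (i + 5) (by omega) (by omega)).2 (by omega))
          (n2 (i + 4) (by omega) (by omega))
    have b1 := pos (i + 4) (by omega) (by omega)
    have b2 := pos (i + 5) (by omega) (by omega)
    show y (i + 1 + 4) = y (i + 4) + 1 ∨ y (i + 4) = y (i + 1 + 4) + 1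
    have e : i + 1 + 4 = i + 5 := by omega
    rw [e]
    unfold RR at a1
    omega) (by
    intro i hi
    exact (ne_of (i + 4) (i + 6) (by omega) (by omega) (n2 (i + 4) (by omega) (by omega))).symm)
  have l1 : (y 5 = y 4 + 1 ∧ y (m + 3) = y 4 + (m - 1)) ∨
      (y 5 + 1 = y 4 ∧ y (m + 3) + (m - 1) = y 4) := by
    have e : m - 1 + 4 = m + 3 := by omega
    rcases line with l | l
    · have u1 := l 1 (by omega)
      have u2 := l (m - 1) (by omega)
      simp only [e] at u1 u2
      exact Or.inl ⟨u1, u2⟩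
    · have u1 := l 1 (by omega)
      have u2 := l (m - 1) (by omega)
      simp only [e] at u1 u2
      exact Or.inr ⟨u1, u2⟩
  obtain ⟨r0, r1, r2⟩ := p0 5 (by omega) (by omega)
  obtain ⟨s0, s1, s2⟩ := p0 (m + 3) (by omega) (by omega)
  have t1 := pos 4 (by omega) (by omega)
  have t2 := pos 5 (by omega) (by omega)
  have t3 := pos (m + 3) (by omega) (by omega)
  have t4 := hb (m + 3) (by omega)
  clear line n2 pos p0 ne_of hB hb hy h
  generalize y (m + 3) = zm at *
  generalize y 0 = y0 at *
  generalize y 1 = y1 at *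
  generalize y 2 = y2 at *
  generalize y 4 = z1 at *
  generalize y 5 = z2 at *
  clear h03 h13 h23 h01 h02 h12 T'
  obtain ⟨e, he, T⟩ := T
  have ep : 0 < e := by omega
  have ep1 : 0 < e + 1 := by omega
  rcases T with ⟨rfl, rfl, rfl⟩ | ⟨rfl, rfl, rfl⟩ | ⟨rfl, rfl, rfl⟩ | ⟨rfl, rfl, rfl⟩ |
      ⟨rfl, rfl, rfl⟩ | ⟨rfl, rfl, rfl⟩ <;>
    simp only [RR_pp ep t1, RR_pp ep t2, RR_pp ep t3, RR_pp ep1 t1, RR_pp ep1 t2, RR_pp ep1 t3,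
      RR_zp t1, RR_zp t2, RR_zp t3] at h14 h04 h24 r0 r1 r2 s0 s1 s2 <;>
    rcases he with rfl | rfl <;>
    rcases l1 with l1 | l1 <;> omega

theorem b1_aux {V : Type*}
    (G : SimpleGraph V) (p : V → ℕ) (hpq : ∀ v, p v ≤ 4)
    (hadj : ∀ u v, u ≠ v → (G.Adj u v ↔ RR 1 3 (p u) (p v))) :
    ¬ ContainsInduced G (Bgraph 1) := by
  rintro ⟨f⟩
  have h := emb_adj hadj f
  refine bull_arith (p (f 0)) (p (f 1)) (p (f 2)) (p (f 3)) (p (f 4)) (hpq _) (hpq _) (hpq _)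
    (hpq _) (hpq _)
    ((h 0 1 (by decide)).1 ?_) ((h 0 2 (by decide)).1 ?_) ((h 1 2 (by decide)).1 ?_)
    ((h 0 3 (by decide)).1 ?_) ((h 1 4 (by decide)).1 ?_)
    ((h 0 4 (by decide)).not.1 ?_) ((h 1 3 (by decide)).not.1 ?_)
    ((h 2 3 (by decide)).not.1 ?_) ((h 2 4 (by decide)).not.1 ?_) <;>
    simp only [Bgraph, SimpleGraph.fromRel_adj] <;> decide

/-- **Remark after Theorem 4 (Statement 15).** Let `m ≥ 1` and `q = max{3m−1, m+3}`.
Let `F = F_p(L_1,…,L_q)` (the joining construction, even though possibly `q < 5`), let `K`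
be a nonempty clique disjoint from `F`, and let `F′` be obtained from `F ∪ K` by joining
every vertex of `K` to every vertex of
`L_{max{m−1,1}} ∪ L_{max{m,2}} ∪ L_{max{2m,3}} ∪ L_{max{2m+1,4}}` (1-based indexing,
`L_n = cliqueAt L n`).  Then `F′` is a connected `{K_{1,3}, B_{1,m}}`-free graph containing
`P_q` as an induced subgraph, and `F′` is neither a fat path nor a fat cycle. -/
theorem stmt15 {V : Type*} [Fintype V] (m : ℕ) (hm : 1 ≤ m) (G : SimpleGraph V)
    (L : Fin (max (3 * m - 1) (m + 3)) → Set V) (K : Set V)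
    (hLne : ∀ i, (L i).Nonempty)
    (hLdisj : ∀ i j, i ≠ j → Disjoint (L i) (L j))
    (hKne : K.Nonempty)
    (hKdisj : ∀ i, Disjoint K (L i))
    (hcover : ∀ v : V, v ∈ K ∨ ∃ i, v ∈ L i)
    (hadj : ∀ u v : V, u ≠ v → (G.Adj u v ↔
      (∃ i j : Fin (max (3 * m - 1) (m + 3)), u ∈ L i ∧ v ∈ L j ∧
        (i = j ∨ (i : ℕ) + 1 = (j : ℕ) ∨ (j : ℕ) + 1 = (i : ℕ))) ∨
      (u ∈ K ∧ v ∈ K) ∨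
      (u ∈ K ∧ v ∈ cliqueAt L (max (m - 1) 1) ∪ cliqueAt L (max m 2) ∪
        cliqueAt L (max (2 * m) 3) ∪ cliqueAt L (max (2 * m + 1) 4)) ∨
      (v ∈ K ∧ u ∈ cliqueAt L (max (m - 1) 1) ∪ cliqueAt L (max m 2) ∪
        cliqueAt L (max (2 * m) 3) ∪ cliqueAt L (max (2 * m + 1) 4)))) :
    G.Connected ∧ ¬ ContainsInduced G K13 ∧ ¬ ContainsInduced G (Bgraph m) ∧
      ContainsInduced G (SimpleGraph.pathGraph (max (3 * m - 1) (m + 3))) ∧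
      (∀ l, ¬ IsFatPath G l) ∧ (∀ l, ¬ IsFatCycle G l) := by
  have e1 : max m 2 = max (m - 1) 1 + 1 := by omega
  have e2 : max (2 * m + 1) 4 = max (2 * m) 3 + 1 := by omega
  rw [e1, e2] at hadj
  obtain ⟨p, hpq, hps, hp⟩ := exists_pos _ (max (m - 1) 1) (max (2 * m) 3) (by omega) (by omega)
    G L K hLne hLdisj hKne hKdisj hcover hadj
  have ha : 1 ≤ max (m - 1) 1 := by omega
  have hac : max (m - 1) 1 + 2 ≤ max (2 * m) 3 := by omega
  have hq : max (2 * m) 3 + 1 ≤ max (3 * m - 1) (m + 3) := by omega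
  have htri := tri_aux _ _ _ ha hq hac G p hps hp
  refine ⟨conn_aux _ _ _ ha hq hac G p hpq hps hp, claw_aux _ _ ha hac G p hp, ?_,
    path_aux _ _ _ G p hps hp, ?_, ?_⟩
  · rcases Nat.lt_or_ge 1 m with h | h
    · refine b_aux m h G p (fun v => ?_) ?_
      · have := hpq v; omega
      · have f1 : max (m - 1) 1 = m - 1 := by omega
        have f2 : max (2 * m) 3 = 2 * m := by omega
        rw [f1, f2] at hp
        exact hp
    · have : m = 1 := by omega
      subst this
      exact b1_aux G p hpq hp
  · rintro l ⟨hl, M, ⟨-, -, hM⟩, hcov⟩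
    refine nofat G _ M ?_ hM hcov htri
    intro i j k
    simp only [Fin.ext_iff, ne_eq]
    omega
  · rintro l ⟨hl, M, ⟨-, -, hM⟩, hcov⟩
    refine nofat G _ M ?_ hM hcov htri
    intro i j k
    simp only [Fin.ext_iff, ne_eq]
    intro h1 h2 h3 t1 t2 t3
    have a1 := mod_aux (l + 1) i j i.2
    have a2 := mod_aux (l + 1) j i j.2
    have a3 := mod_aux (l + 1) i k i.2
    have a4 := mod_aux (l + 1) k i k.2
    have a5 := mod_aux (l + 1) j k j.2
    have a6 := mod_aux (l + 1) k j k.2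
    have t1' := (t1.resolve_left h1).imp a1 a2
    have t2' := (t2.resolve_left h2).imp a3 a4
    have t3' := (t3.resolve_left h3).imp a5 a6
    clear t1 t2 t3 a1 a2 a3 a4 a5 a6
    omega
end

section
/- Every 2-connected {K_{1,3}, B_{1,2}}-free graph has a Hamiltonian cycle. -/
open SimpleGraph

/-- A graph is 2-connected if it has at least three vertices and remains connected after
the deletion of any single vertex. -/
def TwoConnected {V : Type*} [Fintype V] (G : SimpleGraph V) : Prop :=
  3 ≤ Fintype.card V ∧ ∀ v : V, (G.induce ({v}ᶜ : Set V)).Connected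

/-- `G` has a Hamiltonian cycle. -/
def HasHamiltonianCycle {V : Type*} [DecidableEq V] (G : SimpleGraph V) : Prop :=
  ∃ (a : V) (p : G.Walk a a), p.IsHamiltonianCycle

namespace BW
variable {V : Type*} {G : SimpleGraph V}

/-- cyclic order of `S` -/
def Ham (G : SimpleGraph V) (S : Set V) : Prop :=
  ∃ l : List V, l.Nodup ∧ (∀ y, y ∈ l ↔ y ∈ S) ∧ l.IsChain G.Adj ∧
    ∀ a ∈ l.getLast?, ∀ b ∈ l.head?, G.Adj a b

def HPath (G : SimpleGraph V) (S : Set V) (u v : V) : Prop :=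
  ∃ l : List V, l.Nodup ∧ (∀ y, y ∈ l ↔ y ∈ S) ∧ l.IsChain G.Adj ∧
    l.head? = some u ∧ l.getLast? = some v

def CF (G : SimpleGraph V) : Prop := ∀ c a b d, G.Adj c a → G.Adj c b → G.Adj c d →
  a ≠ b → a ≠ d → b ≠ d → ¬ G.Adj a b → ¬ G.Adj a d → ¬ G.Adj b d → False

def BF (G : SimpleGraph V) : Prop := ∀ t0 t1 t2 a b c, G.Adj t0 t1 → G.Adj t0 t2 → G.Adj t1 t2 →
  G.Adj t0 a → G.Adj t1 b → G.Adj b c → ¬ G.Adj t0 b → ¬ G.Adj t0 c → ¬ G.Adj t1 a →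
  ¬ G.Adj t1 c → ¬ G.Adj t2 a → ¬ G.Adj t2 b → ¬ G.Adj t2 c → ¬ G.Adj a b → ¬ G.Adj a c → False

def ConnS (G : SimpleGraph V) (A : Set V) : Prop :=
  ∀ T ⊆ A, T.Nonempty → (A \ T).Nonempty → ∃ a ∈ T, ∃ b ∈ A \ T, G.Adj a b

theorem isChain_rev {l : List V} : l.reverse.IsChain G.Adj ↔ l.IsChain G.Adj := by
  rw [List.isChain_reverse]
  simp only [G.adj_comm]

theorem ham_to_cycle [Fintype V] [DecidableEq V] (h3 : 3 ≤ Fintype.card V)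
    (h : Ham G Set.univ) : HasHamiltonianCycle G := by
  obtain ⟨l, hn, hm, hc, hcl⟩ := h
  have hlen : l.length = Fintype.card V := by
    rw [← List.toFinset_card_of_nodup hn, ← Finset.card_univ]
    congr 1
    ext y; simp [hm]
  have hne : l ≠ [] := by rintro rfl; simp at hlen; omega
  have hadj : G.Adj (l.getLast hne) (l.head hne) :=
    hcl _ (by simp [List.getLast?_eq_getLast_of_ne_nil hne]) _ (by simp [List.head?_eq_some_head hne])
  refine ⟨l.getLast hne, SimpleGraph.Walk.cons hadj (SimpleGraph.Walk.ofSupport l hne hc), ?_⟩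
  rw [SimpleGraph.Walk.isHamiltonianCycle_iff_isCycle_and_length_eq,
    SimpleGraph.Walk.isCycle_iff_isPath_tail_and_le_length]
  refine ⟨⟨?_, ?_⟩, ?_⟩
  · simp [SimpleGraph.Walk.isPath_def, hn]
  · simp; omega
  · simp; omega

theorem rank_path [Fintype V] (S : Set V) (f : V → ℕ) (u v : V) (hu : u ∈ S) (hv : v ∈ S)
    (hfu : ∀ y ∈ S, y ≠ u → f u < f y) (hfv : ∀ y ∈ S, y ≠ v → f y < f v)
    (h : ∀ y ∈ S, ∀ y' ∈ S, y ≠ y' → f y ≤ f y' → (∀ w ∈ S, ¬ (f y < f w ∧ f w < f y')) →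
      G.Adj y y') : HPath G S u v := by
  classical
  set r : V → V → Prop := fun a b => f a ≤ f b with hr
  have : Std.Total r := ⟨fun a b => le_total (f a) (f b)⟩
  have : IsTrans V r := ⟨fun a b c h1 h2 => le_trans (α := ℕ) h1 h2⟩
  set l := (S.toFinset.toList).insertionSort r with hl
  have hp := List.perm_insertionSort r S.toFinset.toList
  rw [← hl] at hp
  have hn : l.Nodup := hp.nodup_iff.2 (Finset.nodup_toList _)
  have hm : ∀ y, y ∈ l ↔ y ∈ S := fun y => by rw [hp.mem_iff]; simp
  have hs : l.Pairwise r := List.pairwise_insertionSort r _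
  have hcs : ∀ l1 l2 : List V, l = l1 ++ l2 → l2.IsChain G.Adj := by
    intro l1 l2
    induction l2 generalizing l1 with
    | nil => simp
    | cons a t ih =>
      intro he
      have ht := ih (l1 ++ [a]) (by simp [he])
      cases t with
      | nil => simp
      | cons b t =>
        rw [List.isChain_cons_cons]
        refine ⟨?_, ht⟩
        rw [he] at hn hs hm
        simp only [List.pairwise_append, List.pairwise_cons, List.nodup_append, List.nodup_cons] at hs hn
        apply h
        · rw [← hm]; simp
        · rw [← hm]; simp
        · rintro rfl; simp at hn
        · exact hs.2.1.1 b (by simp)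
        · intro w hw
          rw [← hm] at hw
          simp only [List.mem_append, List.mem_cons] at hw
          rcases hw with hw | rfl | rfl | hw
          · have := hs.2.2 w hw a (by simp)
            simp only [hr] at this
            omega
          · omega
          · omega
          · have := hs.2.1.2.1 w hw
            simp only [hr] at this
            omega
  refine ⟨l, hn, hm, hcs [] l rfl, ?_, ?_⟩
  · cases hl' : l with
    | nil => have := (hm u).2 hu; simp [hl'] at this
    | cons a t =>
      simp only [List.head?_cons, Option.some.injEq]
      by_contra hne
      rw [hl'] at hs hm
      have h1 := hfu a ((hm a).1 (by simp)) hne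
      have h2 : u ∈ a :: t := (hm u).2 hu
      rw [List.pairwise_cons] at hs
      rcases List.mem_cons.1 h2 with h2 | h2
      · exact hne h2.symm
      · have := hs.1 u h2
        simp only [hr] at this
        omega
  · rcases List.eq_nil_or_concat l with hl' | ⟨t, a, hl'⟩
    · have := (hm u).2 hu; simp [hl'] at this
    · rw [hl']
      simp
      by_contra hne
      rw [hl'] at hs hm
      have h1 := hfv a ((hm a).1 (by simp)) hne
      have h2 := (hm v).2 hv
      simp at h2
      rw [List.concat_eq_append, List.pairwise_append] at hs
      rcases h2 with h2 | h2
      · have := hs.2.2 v h2 a (by simp)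
        simp only [hr] at this
        omega
      · exact hne h2.symm

theorem close_path {S : Set V} {u v x y : V} {P : List V} (h : HPath G S u v) (hn : P.Nodup)
    (hP : ∀ y, y ∈ P ↔ y ∉ S) (hc : P.IsChain G.Adj) (hx : P.head? = some x)
    (hy : P.getLast? = some y) (hux : G.Adj u x) (hvy : G.Adj v y) : Ham G Set.univ := by
  obtain ⟨l, hln, hm, hlc, hh, ht⟩ := h
  refine ⟨P ++ l.reverse, ?_, ?_, ?_, ?_⟩
  · rw [List.nodup_append']
    refine ⟨hn, List.nodup_reverse.2 hln, ?_⟩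
    intro a ha hb
    rw [List.mem_reverse, hm] at hb
    exact (hP a).1 ha hb
  · intro y; simp [hP, hm, em']
  · rw [List.isChain_append, isChain_rev]
    refine ⟨hc, hlc, ?_⟩
    simp [hy, ht, hvy.symm]
  · simp [hh, hx, hux]

theorem rot {A B : List V} (hc : (A ++ B).IsChain G.Adj)
    (hcl : ∀ a ∈ (A ++ B).getLast?, ∀ b ∈ (A ++ B).head?, G.Adj a b) :
    (B ++ A).IsChain G.Adj ∧ ∀ a ∈ (B ++ A).getLast?, ∀ b ∈ (B ++ A).head?, G.Adj a b := by
  rcases A with _ | ⟨a, A⟩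
  · simpa using And.intro hc hcl
  rcases B with _ | ⟨b, B⟩
  · simp only [List.append_nil] at hc hcl
    simpa using And.intro hc hcl
  rw [List.getLast?_append_of_ne_nil _ (by simp)] at hcl ⊢
  rw [List.isChain_append] at hc ⊢
  refine ⟨⟨hc.2.1, hc.1, ?_⟩, ?_⟩
  · simpa using hcl
  · simpa using hc.2.2

theorem cf_of [DecidableEq V] (h : ¬ ContainsInduced G K13) : CF G := by
  intro c a b d hca hcb hcd hab had hbd h1 h2 h3
  apply h
  have e1 := hca.ne
  have e2 := hcb.ne
  have e3 := hcd.ne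
  have hca' := hca.symm
  have hcb' := hcb.symm
  have hcd' := hcd.symm
  have h1' := mt SimpleGraph.Adj.symm h1
  have h2' := mt SimpleGraph.Adj.symm h2
  have h3' := mt SimpleGraph.Adj.symm h3
  refine ⟨⟨⟨![c,a,b,d], ?_⟩, ?_⟩⟩
  · clear h
    intro i j hij
    fin_cases i <;> fin_cases j <;> simp_all
  · clear h
    intro i j
    change G.Adj (![c,a,b,d] i) (![c,a,b,d] j) ↔ _
    fin_cases i <;> fin_cases j <;> simp [K13, graphOfList, *]

theorem bf_of [DecidableEq V] (h : ¬ ContainsInduced G (Bgraph 2)) : BF G := by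
  intro t0 t1 t2 a b c a1 a2 a3 a4 a5 a6 n1 n2 n3 n4 n5 n6 n7 n8 n9
  apply h
  have b1 := a1.symm
  have b2 := a2.symm
  have b3 := a3.symm
  have b4 := a4.symm
  have b5 := a5.symm
  have b6 := a6.symm
  have m1 := mt SimpleGraph.Adj.symm n1
  have m2 := mt SimpleGraph.Adj.symm n2
  have m3 := mt SimpleGraph.Adj.symm n3
  have m4 := mt SimpleGraph.Adj.symm n4
  have m5 := mt SimpleGraph.Adj.symm n5
  have m6 := mt SimpleGraph.Adj.symm n6
  have m7 := mt SimpleGraph.Adj.symm n7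
  have m8 := mt SimpleGraph.Adj.symm n8
  have m9 := mt SimpleGraph.Adj.symm n9
  have e1 : t0 ≠ t1 := a1.ne
  have e2 : t0 ≠ t2 := a2.ne
  have e3 : t0 ≠ a := a4.ne
  have e4 : t0 ≠ b := by rintro rfl; exact n6 b2
  have e5 : t0 ≠ c := by rintro rfl; exact n1 b6
  have e6 : t1 ≠ t2 := a3.ne
  have e7 : t1 ≠ a := by rintro rfl; exact n5 b3
  have e8 : t1 ≠ b := a5.ne
  have e9 : t1 ≠ c := by rintro rfl; exact n2 a1
  have e10 : t2 ≠ a := by rintro rfl; exact n3 a3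
  have e11 : t2 ≠ b := by rintro rfl; exact n1 a2
  have e12 : t2 ≠ c := by rintro rfl; exact n2 a2
  have e13 : a ≠ b := by rintro rfl; exact n1 a4
  have e14 : a ≠ c := by rintro rfl; exact n2 a4
  have e15 : b ≠ c := a6.ne
  refine ⟨⟨⟨![t0,t1,t2,a,b,c], ?_⟩, ?_⟩⟩
  · clear h
    intro i j hij
    have f1 := e1.symm
    have f2 := e2.symm
    have f3 := e3.symm
    have f4 := e4.symm
    have f5 := e5.symm
    have f6 := e6.symm
    have f7 := e7.symm
    have f8 := e8.symm
    have f9 := e9.symm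
    have f10 := e10.symm
    have f11 := e11.symm
    have f12 := e12.symm
    have f13 := e13.symm
    have f14 := e14.symm
    have f15 := e15.symm
    fin_cases i <;> fin_cases j <;> first | rfl | (exfalso; revert hij; assumption)
  · clear h
    intro i j
    change G.Adj (![t0,t1,t2,a,b,c] i) (![t0,t1,t2,a,b,c] j) ↔ _
    fin_cases i <;> fin_cases j <;>
      first
      | exact iff_of_true (by assumption) (by simp [Bgraph])
      | exact iff_of_false (by first | assumption | exact G.irrefl) (by simp [Bgraph])
end BW

namespace BW
variable {V : Type*} {G : SimpleGraph V}

def ballS (G : SimpleGraph V) (S : Set V) (u : V) : ℕ → Set V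
  | 0 => {u}
  | k+1 => {y | y ∈ S ∧ (y ∈ ballS G S u k ∨ ∃ w ∈ ballS G S u k, G.Adj w y)}

theorem exists_d {S : Set V} {u : V} (hS : ConnS G S) (hu : u ∈ S) :
    ∃ d : V → ℕ, d u = 0 ∧ (∀ y ∈ S, d y = 0 → y = u) ∧
      (∀ y ∈ S, ∀ w ∈ S, G.Adj w y → d y ≤ d w + 1) ∧
      (∀ y ∈ S, ∀ k, d y = k + 1 → ∃ w ∈ S, d w = k ∧ G.Adj w y) := by
  have hsub : ∀ k, ballS G S u k ⊆ S := by
    intro k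
    cases k with
    | zero => rintro y rfl; exact hu
    | succ k => exact fun y hy => hy.1
  have hall : ∀ y ∈ S, ∃ k, y ∈ ballS G S u k := by
    by_contra hcon
    push Not at hcon
    obtain ⟨y, hy, hyk⟩ := hcon
    obtain ⟨a, ha, b, hb, hab⟩ := hS {y | ∃ k, y ∈ ballS G S u k}
      (fun y ⟨k, hk⟩ => hsub k hk) ⟨u, 0, rfl⟩ ⟨y, hy, fun ⟨k, hk⟩ => hyk k hk⟩
    obtain ⟨k, hk⟩ := ha
    exact hb.2 ⟨k+1, hb.1, Or.inr ⟨a, hk, hab⟩⟩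
  let d : V → ℕ := fun y => sInf {k | y ∈ ballS G S u k}
  have hd : ∀ y ∈ S, y ∈ ballS G S u (d y) := fun y hy => Nat.sInf_mem (hall y hy)
  have hle : ∀ y k, y ∈ ballS G S u k → d y ≤ k := fun y k h => Nat.sInf_le h
  refine ⟨d, ?_, ?_, ?_, ?_⟩
  · have := hle u 0 rfl
    omega
  · intro y hy h0
    have := hd y hy
    rw [h0] at this
    exact this
  · intro y hy w hw hwy
    exact hle _ _ ⟨hy, Or.inr ⟨w, hd w hw, hwy⟩⟩
  · intro y hy k hk
    have h1 := hd y hy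
    rw [hk] at h1
    rcases h1.2 with h2 | ⟨w, hw, hwy⟩
    · have := hle _ _ h2; omega
    · refine ⟨w, hsub _ hw, ?_, hwy⟩
      have h3 := hle _ _ hw
      have h4 : d y ≤ d w + 1 := hle _ _ ⟨hy, Or.inr ⟨w, hd w (hsub _ hw), hwy⟩⟩
      omega

theorem layer_path [Fintype V] (cf : CF G) (bf : BF G) {S : Set V} {u v x1 x2 : V}
    (hS : ConnS G S) (hu : u ∈ S) (hv : v ∈ S) (huv : u ≠ v)
    (hux : G.Adj u x1) (hx12 : G.Adj x1 x2) (hux2 : ¬ G.Adj u x2)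
    (hKu : ∀ y ∈ S, ∀ y' ∈ S, y ≠ y' → G.Adj u y → G.Adj u y' → G.Adj y y')
    (hKv : ∀ y ∈ S, ∀ y' ∈ S, y ≠ y' → G.Adj v y → G.Adj v y' → G.Adj y y')
    (h1 : ∀ y ∈ S, G.Adj u y → ¬ G.Adj x1 y ∧ ¬ G.Adj x2 y)
    (h2 : ∀ p ∈ S, ∀ y ∈ S, G.Adj u p → G.Adj p y → y ≠ u → ¬ G.Adj u y →
      ¬ G.Adj x1 y ∧ ¬ G.Adj x2 y)
    (h3 : ∀ p ∈ S, ∀ w ∈ S, ∀ y ∈ S, G.Adj u p → G.Adj p w → G.Adj w y → y ≠ u →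
      ¬ G.Adj x1 y) : HPath G S u v := by
  obtain ⟨d, d0, d0', dle, dpred⟩ := exists_d hS hu
  have dne : ∀ y ∈ S, ∀ w ∈ S, d w + 2 ≤ d y → ¬ G.Adj w y := by
    intro y hy w hw h h'
    have := dle y hy w hw h'
    omega
  have dne' : ∀ y ∈ S, ∀ w ∈ S, d w + 2 ≤ d y → ¬ G.Adj y w := fun y hy w hw h h' =>
    dne y hy w hw h h'.symm
  have d1 : ∀ y ∈ S, d y = 1 → G.Adj u y := by
    intro y hy h
    obtain ⟨w, hw, hw0, hwy⟩ := dpred y hy 0 h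
    rw [d0' w hw hw0] at hwy
    exact hwy
  have key : ∀ k, (∀ y ∈ S, ∀ y' ∈ S, y ≠ y' → d y = k → d y' = k → G.Adj y y') ∧
      (∀ y ∈ S, ∀ y' ∈ S, d y = k → d y' = k + 1 → G.Adj y y') := by
    intro k
    induction k using Nat.strong_induction_on with
    | _ k ih =>
    have hcl : ∀ y ∈ S, ∀ y' ∈ S, y ≠ y' → d y = k → d y' = k → G.Adj y y' := by
      intro y hy y' hy' hne hk hk'
      match k, ih, hk, hk' with
      | 0, ih, hk, hk' => exact absurd ((d0' y hy hk).trans (d0' y' hy' hk').symm) hne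
      | 1, ih, hk, hk' => exact hKu y hy y' hy' hne (d1 y hy hk) (d1 y' hy' hk')
      | k+2, ih, hk, hk' =>
        by_contra hcon
        obtain ⟨w, hw, hwk, hwy⟩ := dpred y hy (k+1) hk
        have hwy' := (ih (k+1) (by omega)).2 w hw y' hy' hwk hk'
        obtain ⟨b, hb, hbk, hbw⟩ := dpred w hw k hwk
        exact cf w b y y' hbw.symm hwy hwy' (by rintro rfl; omega) (by rintro rfl; omega) hne
          (dne y hy b hb (by omega)) (dne y' hy' b hb (by omega)) hcon
    refine ⟨hcl, ?_⟩
    intro y hy y' hy' hk hk'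
    obtain ⟨p, hp, hpk, hpy'⟩ := dpred y' hy' k hk'
    by_cases hpy : p = y
    · rwa [← hpy]
    have hpy2 := hcl p hp y hy hpy hpk hk
    by_contra hcon
    match k, ih, hk, hk', hpk with
    | 0, ih, hk, hk', hpk => exact hpy ((d0' p hp hpk).trans (d0' y hy hk).symm)
    | 1, ih, hk, hk', hpk =>
      have a1 := d1 p hp hpk
      have a2 := d1 y hy hk
      have n1 := dne y' hy' u hu (by omega)
      have hh := h2 p hp y' hy' a1 hpy' (by rintro rfl; omega) n1
      have hh1 := h1 p hp a1
      have hh2 := h1 y hy a2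
      exact bf p u y y' x1 x2 a1.symm hpy2 a2 hpy' hux hx12
        (fun h => hh1.1 h.symm) (fun h => hh1.2 h.symm) n1 hux2 hcon
        (fun h => hh2.1 h.symm) (fun h => hh2.2 h.symm) (fun h => hh.1 h.symm)
        (fun h => hh.2 h.symm)
    | k+2, ih, hk, hk', hpk =>
      obtain ⟨b, hb, hbk, hbp⟩ := dpred p hp (k+1) hpk
      have hby := (ih (k+1) (by omega)).2 b hb y hy hbk hk
      obtain ⟨b', hb', hbk', hbb'⟩ := dpred b hb k hbk
      have : ∃ b'', G.Adj b' b'' ∧ ¬ G.Adj p b'' ∧ ¬ G.Adj b b'' ∧ ¬ G.Adj y b'' ∧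
          ¬ G.Adj y' b'' := by
        rcases k with _ | k
        · have hb'u := d0' b' hb' hbk'
          subst hb'u
          have hyu : y' ≠ b' := by rintro rfl; omega
          refine ⟨x1, hux, fun h => (h2 b hb p hp hbb' hbp (by rintro rfl; omega)
            (dne p hp b' hb' (by omega))).1 h.symm, fun h => (h1 b hb hbb').1 h.symm,
            fun h => (h2 b hb y hy hbb' hby (by rintro rfl; omega)
            (dne y hy b' hb' (by omega))).1 h.symm,
            fun h => h3 b hb p hp y' hy' hbb' hbp hpy' hyu h.symm⟩
        · obtain ⟨b'', hb'', hbk'', hbb''⟩ := dpred b' hb' k hbk'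
          exact ⟨b'', hbb''.symm, dne' _ hp _ hb'' (by omega), dne' _ hb _ hb'' (by omega),
            dne' _ hy _ hb'' (by omega), dne' _ hy' _ hb'' (by omega)⟩
      obtain ⟨b'', e1, e2, e3, e4, e5⟩ := this
      exact bf p b y y' b' b'' hbp.symm hpy2 hby hpy' hbb'.symm e1
        (dne' _ hp _ hb' (by omega)) e2 (dne _ hy' _ hb (by omega)) e3 hcon
        (dne' _ hy _ hb' (by omega)) e4 (dne' _ hy' _ hb' (by omega)) e5
  have hex : ∀ n, ∀ y ∈ S, ∀ j, d y = j + n → ∃ y' ∈ S, d y' = j := by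
    intro n
    induction n with
    | zero => intro y hy j h; exact ⟨y, hy, h⟩
    | succ n ihn =>
      intro y hy j h
      obtain ⟨w, hw, hwk, -⟩ := dpred y hy (j+n) (by omega)
      exact ihn w hw j hwk
  have hvpos : d v ≠ 0 := fun h => huv (d0' v hv h).symm
  have hmax : ∀ y ∈ S, d y ≤ d v := by
    intro y hy
    by_contra hlt
    obtain ⟨z, hz, hzk⟩ := hex (d y - (d v + 1)) y hy (d v + 1) (by omega)
    obtain ⟨w, hw, hwk, hwv⟩ := dpred v hv (d v - 1) (by omega)
    have a1 := (key (d v)).2 v hv z hz rfl hzk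
    have := hKv w hw z hz (by rintro rfl; omega) hwv.symm a1
    exact dne z hz w hw (by omega) this
  classical
  let f : V → ℕ := fun y => if y = v then d v + 1 else d y
  have fv : f v = d v + 1 := by simp [f]
  have fo : ∀ y, y ≠ v → f y = d y := fun y h => by simp [f, h]
  refine rank_path S f u v hu hv ?_ ?_ ?_
  · intro y hy hyu
    have : d y ≠ 0 := fun h => hyu (d0' y hy h)
    rw [fo u huv]
    by_cases h : y = v
    · subst h; omega
    · rw [fo y h]; omega
  · intro y hy hyv
    have := hmax y hy
    rw [fo y hyv]; omega
  · intro y hy y' hy' hne hle hbt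
    have m1 := hmax y hy
    have m2 := hmax y' hy'
    by_cases hyv : y = v
    · subst hyv
      rw [fo y' hne.symm] at hle
      omega
    rw [fo y hyv] at hle hbt
    have aux : ∀ D, d y' = D → (∀ w ∈ S, w ≠ v → ¬ (d y < d w ∧ d w < D)) → d y ≤ D →
        (D ≤ d v) → G.Adj y y' := by
      intro D hD hb hle' hDv
      by_cases c1 : d y = D
      · exact (key D).1 y hy y' hy' hne c1 hD
      by_cases c2 : D = d y + 1
      · exact (key (d y)).2 y hy y' hy' rfl (by omega)
      obtain ⟨w, hw, hwk⟩ := hex (D - (d y + 1)) y' hy' (d y + 1) (by omega)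
      exact absurd ⟨by omega, by omega⟩ (hb w hw (by rintro rfl; omega))
    refine aux (d y') rfl ?_ ?_ m2
    · intro w hw hwv
      have := hbt w hw
      rw [fo w hwv] at this
      by_cases hy'v : y' = v
      · subst hy'v; omega
      · rw [fo y' hy'v] at this; exact this
    · by_cases hy'v : y' = v
      · subst hy'v; omega
      · rw [fo y' hy'v] at hle; exact hle
end BW

namespace BW
variable {V : Type*} {G : SimpleGraph V}

theorem cyc1 {u v x y a1 b1 a2 b2 : V} {P L1 L2 : List V}
    (hno : ∀ l : List V, l.Perm (u :: (L1 ++ v :: L2) ++ P) → l.IsChain G.Adj →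
      (∀ a ∈ l.getLast?, ∀ b ∈ l.head?, G.Adj a b) → False)
    (cP : P.IsChain G.Adj) (hPx : P.head? = some x) (hPy : P.getLast? = some y)
    (hux : G.Adj u x) (hvy : G.Adj v y) (c1 : L1.IsChain G.Adj) (c2 : L2.IsChain G.Adj)
    (e1 : L1.head? = some a1) (e2 : L1.getLast? = some b1)
    (e3 : L2.head? = some a2) (e4 : L2.getLast? = some b2)
    (k1 : G.Adj u a1) (k2 : G.Adj b1 v) (k3 : G.Adj v a2) (k4 : G.Adj b2 u)
    (k5 : G.Adj a1 b2) (k6 : G.Adj b1 a2) :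
    ¬ G.Adj u a2 ∧ ¬ G.Adj u b1 ∧ ¬ G.Adj v a1 ∧ ¬ G.Adj v b2 ∧ ¬ G.Adj a1 a2 := by
  classical
  have hux' := hux.symm
  have hvy' := hvy.symm
  have k1' := k1.symm
  have k2' := k2.symm
  have k3' := k3.symm
  have k4' := k4.symm
  have k5' := k5.symm
  have k6' := k6.symm
  refine ⟨fun h => ?_, fun h => ?_, fun h => ?_, fun h => ?_, fun h => ?_⟩
  · refine hno (P.reverse ++ u :: (L2 ++ (L1 ++ [v]))) ?_ ?_ ?_
    · rw [List.perm_iff_count]; intro w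
      simp only [List.count_append, List.count_cons, List.count_reverse, List.count_nil]; omega
    · simp [List.isChain_append, List.isChain_cons, isChain_rev, *]
    · simp [List.getLast?_append, List.getLast?_cons, *]
  · refine hno (P.reverse ++ u :: (L1.reverse ++ (L2.reverse ++ [v]))) ?_ ?_ ?_
    · rw [List.perm_iff_count]; intro w
      simp only [List.count_append, List.count_cons, List.count_reverse, List.count_nil]; omega
    · simp [List.isChain_append, List.isChain_cons, isChain_rev, *]
    · simp [List.getLast?_append, List.getLast?_cons, *]
  · refine hno (P ++ v :: (L1 ++ (L2 ++ [u]))) ?_ ?_ ?_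
    · rw [List.perm_iff_count]; intro w
      simp only [List.count_append, List.count_cons, List.count_reverse, List.count_nil]; omega
    · simp [List.isChain_append, List.isChain_cons, isChain_rev, *]
    · simp [List.getLast?_append, List.getLast?_cons, *]
  · refine hno (P ++ v :: (L2.reverse ++ (L1.reverse ++ [u]))) ?_ ?_ ?_
    · rw [List.perm_iff_count]; intro w
      simp only [List.count_append, List.count_cons, List.count_reverse, List.count_nil]; omega
    · simp [List.isChain_append, List.isChain_cons, isChain_rev, *]
    · simp [List.getLast?_append, List.getLast?_cons, *]
  · have h' := h.symm
    refine hno (P.reverse ++ u :: (L2.reverse ++ (L1 ++ [v]))) ?_ ?_ ?_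
    · rw [List.perm_iff_count]; intro w
      simp only [List.count_append, List.count_cons, List.count_reverse, List.count_nil]; omega
    · simp [List.isChain_append, List.isChain_cons, isChain_rev, *]
    · simp [List.getLast?_append, List.getLast?_cons, *]

theorem cyc2 (cf : CF G) {u v x y a1 b1 a2 b2 : V} {P L1 L2 : List V}
    (hno : ∀ l : List V, l.Perm (u :: (L1 ++ v :: L2) ++ P) → l.IsChain G.Adj →
      (∀ a ∈ l.getLast?, ∀ b ∈ l.head?, G.Adj a b) → False)
    (hnd : (u :: (L1 ++ v :: L2)).Nodup)
    (cP : P.IsChain G.Adj) (hPx : P.head? = some x) (hPy : P.getLast? = some y)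
    (hux : G.Adj u x) (hvy : G.Adj v y) (c1 : L1.IsChain G.Adj) (c2 : L2.IsChain G.Adj)
    (e1 : L1.head? = some a1) (e2 : L1.getLast? = some b1)
    (e3 : L2.head? = some a2) (e4 : L2.getLast? = some b2)
    (k1 : G.Adj u a1) (k2 : G.Adj b1 v) (k3 : G.Adj v a2) (k4 : G.Adj b2 u)
    (k5 : G.Adj a1 b2) (k6 : G.Adj b1 a2) {z : V} (hz : z ∈ L1) (huz : G.Adj u z)
    (hvz : G.Adj v z) (hbz : G.Adj b2 z) : False := by
  classical
  obtain ⟨n1, n2, n3, n4, n5⟩ := cyc1 hno cP hPx hPy hux hvy c1 c2 e1 e2 e3 e4 k1 k2 k3 k4 k5 k6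
  obtain ⟨M, N, rfl⟩ := List.append_of_mem hz
  have hM : M ≠ [] := by
    rintro rfl
    simp at e1; subst e1; exact n3 hvz
  have hN : N ≠ [] := by
    rintro rfl
    simp at e2; subst e2; exact n2 huz
  obtain ⟨m, hm⟩ : ∃ m, M.getLast? = some m := ⟨_, List.getLast?_eq_getLast_of_ne_nil hM⟩
  obtain ⟨n, hn⟩ : ∃ n, N.head? = some n := ⟨_, List.head?_eq_some_head hN⟩
  have hM1 : M.head? = some a1 := by
    rw [List.head?_append_of_ne_nil _ hM] at e1; exact e1
  have hN1 : N.getLast? = some b1 := by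
    rw [List.getLast?_append_of_ne_nil _ (by simp), List.getLast?_cons] at e2
    obtain ⟨w, hw⟩ : ∃ w, N.getLast? = some w := ⟨_, List.getLast?_eq_getLast_of_ne_nil hN⟩
    rw [hw] at e2 ⊢
    simpa using e2
  rw [List.isChain_append, List.isChain_cons] at c1
  obtain ⟨cM, ⟨cz, cN⟩, cmz⟩ := c1
  have kzn : G.Adj z n := cz n hn
  have kmz : G.Adj m z := cmz m hm z (by simp)
  have hmM : m ∈ M := List.mem_of_getLast? hm
  have hnN : n ∈ N := List.mem_of_mem_head? hn
  have hmn : m ≠ n := by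
    rintro rfl
    simp [List.nodup_append] at hnd
    grind
  have hun : u ≠ n := by
    rintro rfl
    simp [hnN] at hnd
  have hvn : v ≠ n := by
    rintro rfl
    simp [List.nodup_append] at hnd
    grind
  have hum : u ≠ m := by
    rintro rfl
    simp [hmM] at hnd
  have huv : u ≠ v := by
    rintro rfl
    simp at hnd
  have hux' := hux.symm
  have hvy' := hvy.symm
  have k1' := k1.symm
  have k2' := k2.symm
  have k3' := k3.symm
  have k4' := k4.symm
  have k5' := k5.symm
  have k6' := k6.symm
  have kzn' := kzn.symm
  have kmz' := kmz.symm
  have huz' := huz.symm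
  have hvz' := hvz.symm
  clear e1 e2 hz
  have q1 : ¬ G.Adj u n := by
    intro h
    refine hno (z :: v :: (P.reverse ++ u :: (N ++ (L2 ++ M)))) ?_ ?_ ?_
    · rw [List.perm_iff_count]; intro w
      simp only [List.count_append, List.count_cons, List.count_reverse]; omega
    · simp [List.isChain_append, List.isChain_cons, isChain_rev, *]
    · simp [List.getLast?_append, List.getLast?_cons, *]
  have q2 : ¬ G.Adj v n := by
    intro h
    refine hno (z :: u :: (P ++ v :: (N ++ (L2 ++ M)))) ?_ ?_ ?_
    · rw [List.perm_iff_count]; intro w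
      simp only [List.count_append, List.count_cons, List.count_reverse]; omega
    · simp [List.isChain_append, List.isChain_cons, isChain_rev, *]
    · simp [List.getLast?_append, List.getLast?_cons, *]
  have q3 : ¬ G.Adj u m := by
    intro h
    refine hno (z :: v :: (P.reverse ++ u :: (M.reverse ++ (L2.reverse ++ N.reverse)))) ?_ ?_ ?_
    · rw [List.perm_iff_count]; intro w
      simp only [List.count_append, List.count_cons, List.count_reverse]; omega
    · simp [List.isChain_append, List.isChain_cons, isChain_rev, *]
    · simp [List.getLast?_append, List.getLast?_cons, *]
  by_cases huv' : G.Adj u v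
  · by_cases hmn' : G.Adj m n
    · refine hno (L2 ++ z :: v :: (P.reverse ++ u :: (M ++ N))) ?_ ?_ ?_
      · rw [List.perm_iff_count]; intro w
        simp only [List.count_append, List.count_cons, List.count_reverse]; omega
      · simp [List.isChain_append, List.isChain_cons, isChain_rev, *]
      · simp [List.getLast?_append, List.getLast?_cons, *]
    · exact cf z u m n huz.symm kmz.symm kzn hum hun hmn q3 q1 hmn'
  · exact cf z u v n huz.symm hvz.symm kzn huv hun hvn huv' q1 q2

theorem cyc_main (cf : CF G) {S : Set V} {P : List V} {x y u v : V} (hS : Ham G S)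
    (noham : ¬ Ham G Set.univ) (hPn : P.Nodup) (hP : ∀ w, w ∈ P ↔ w ∉ S)
    (cP : P.IsChain G.Adj) (hPx : P.head? = some x) (hPy : P.getLast? = some y)
    (hu : u ∈ S) (hv : v ∈ S) (huv : u ≠ v)
    (hux : G.Adj u x) (hvy : G.Adj v y)
    (hx : ∀ s ∈ S, G.Adj x s → s = u ∨ P = [x]) (hy : ∀ s ∈ S, G.Adj y s → s = v ∨ P = [y]) :
    (∃ p ∈ S, ∃ z ∈ S, G.Adj u p ∧ ¬ G.Adj x p ∧ G.Adj v z ∧ ¬ G.Adj y z ∧ ¬ G.Adj p z) ∧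
    ∀ z ∈ S, G.Adj u z → ¬ G.Adj x z → G.Adj v z → ¬ G.Adj y z → False := by
  classical
  obtain ⟨C, hCn, hCm, hCc, hCcl⟩ := hS
  obtain ⟨A, B, rfl⟩ := List.append_of_mem ((hCm u).2 hu)
  obtain ⟨hc, hcl⟩ := rot hCc hCcl
  have hvm : v ∈ B ++ A := by
    have := (hCm v).2 hv
    simp [huv.symm] at this ⊢
    tauto
  obtain ⟨L1, L2, hL⟩ := List.append_of_mem hvm
  have hperm : (u :: (L1 ++ v :: L2)).Perm (A ++ u :: B) := by
    rw [← hL]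
    rw [List.perm_iff_count]; intro w
    simp only [List.count_append, List.count_cons]; omega
  rw [List.cons_append, hL] at hc hcl
  have hn : (u :: (L1 ++ v :: L2)).Nodup := hperm.nodup_iff.2 hCn
  have hm : ∀ w, w ∈ u :: (L1 ++ v :: L2) ↔ w ∈ S := fun w => by rw [hperm.mem_iff, hCm]
  clear hperm hL hvm hCc hCcl hCn hCm
  have hno : ∀ l : List V, l.Perm (u :: (L1 ++ v :: L2) ++ P) → l.IsChain G.Adj →
      (∀ a ∈ l.getLast?, ∀ b ∈ l.head?, G.Adj a b) → False := by
    intro l hl h1 h2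
    refine noham ⟨l, ?_, ?_, h1, h2⟩
    · rw [hl.nodup_iff, List.nodup_append']
      refine ⟨hn, hPn, ?_⟩
      intro a ha hb
      exact (hP a).1 hb ((hm a).1 ha)
    · intro w
      rw [hl.mem_iff, List.mem_append, hm, hP]
      simp [em]
  have hux' := hux.symm
  have hvy' := hvy.symm
  rw [List.isChain_cons, List.isChain_append, List.isChain_cons] at hc
  obtain ⟨ku, c1, ⟨kv, c2⟩, kv'⟩ := hc
  have hL1 : L1 ≠ [] := by
    rintro rfl
    refine hno (u :: (P ++ v :: L2)) ?_ ?_ ?_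
    · rw [List.perm_iff_count]; intro w
      simp only [List.count_append, List.count_cons, List.count_nil]; omega
    · simp [List.isChain_append, List.isChain_cons, *]
      simpa using kv
    · simpa [List.getLast?_append, List.getLast?_cons] using hcl
  have hL2 : L2 ≠ [] := by
    rintro rfl
    refine hno (u :: (L1 ++ v :: P.reverse)) ?_ ?_ ?_
    · rw [List.perm_iff_count]; intro w
      simp only [List.count_append, List.count_cons, List.count_nil, List.count_reverse]; omega
    · simp [List.isChain_append, List.isChain_cons, isChain_rev, *]
      simp at ku kv'
      exact kv'
    · simp [List.getLast?_append, List.getLast?_cons, *]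
  obtain ⟨a1, e1⟩ : ∃ m, L1.head? = some m := ⟨_, List.head?_eq_some_head hL1⟩
  obtain ⟨b1, e2⟩ : ∃ m, L1.getLast? = some m := ⟨_, List.getLast?_eq_getLast_of_ne_nil hL1⟩
  obtain ⟨a2, e3⟩ : ∃ m, L2.head? = some m := ⟨_, List.head?_eq_some_head hL2⟩
  obtain ⟨b2, e4⟩ : ∃ m, L2.getLast? = some m := ⟨_, List.getLast?_eq_getLast_of_ne_nil hL2⟩
  have k1 : G.Adj u a1 := ku a1 (by simp [List.head?_append, e1])
  have k2 : G.Adj b1 v := kv' b1 e2 v (by simp)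
  have k3 : G.Adj v a2 := kv a2 e3
  have k4 : G.Adj b2 u := hcl b2 (by simp [List.getLast?_append, List.getLast?_cons, e4]) u (by simp)
  have ma1 : a1 ∈ L1 := List.mem_of_mem_head? e1
  have mb1 : b1 ∈ L1 := List.mem_of_getLast? e2
  have ma2 : a2 ∈ L2 := List.mem_of_mem_head? e3
  have mb2 : b2 ∈ L2 := List.mem_of_getLast? e4
  have sa1 : a1 ∈ S := (hm _).1 (by simp [ma1])
  have sb1 : b1 ∈ S := (hm _).1 (by simp [mb1])
  have sa2 : a2 ∈ S := (hm _).1 (by simp [ma2])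
  have sb2 : b2 ∈ S := (hm _).1 (by simp [mb2])
  have hn' := hn
  simp only [List.nodup_cons, List.nodup_append, List.mem_append, List.mem_cons] at hn'
  have d1 : a1 ≠ b2 := by grind
  have d2 : b1 ≠ a2 := by grind
  have k1' := k1.symm
  have k2' := k2.symm
  have k3' := k3.symm
  have k4' := k4.symm
  have x1 : ¬ G.Adj x a1 := by
    intro h
    have h' := h.symm
    rcases hx a1 sa1 h with h | rfl
    · exact k1.ne h.symm
    refine hno (u :: x :: (L1 ++ v :: L2)) ?_ ?_ ?_
    · rw [List.perm_iff_count]; intro w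
      simp only [List.count_append, List.count_cons, List.count_nil]; omega
    · simp [List.isChain_append, List.isChain_cons, *]
    · simp [List.getLast?_append, List.getLast?_cons, *]
  have x2 : ¬ G.Adj x b2 := by
    intro h
    have h' := h.symm
    rcases hx b2 sb2 h with h | rfl
    · exact k4.ne h
    refine hno (x :: u :: (L1 ++ v :: L2)) ?_ ?_ ?_
    · rw [List.perm_iff_count]; intro w
      simp only [List.count_append, List.count_cons, List.count_nil]; omega
    · simp [List.isChain_append, List.isChain_cons, *]
    · simp [List.getLast?_append, List.getLast?_cons, *]
  have y1 : ¬ G.Adj y a2 := by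
    intro h
    have h' := h.symm
    rcases hy a2 sa2 h with h | rfl
    · exact k3.ne h.symm
    refine hno (u :: (L1 ++ v :: y :: L2)) ?_ ?_ ?_
    · rw [List.perm_iff_count]; intro w
      simp only [List.count_append, List.count_cons, List.count_nil]; omega
    · simp [List.isChain_append, List.isChain_cons, *]
    · simp [List.getLast?_append, List.getLast?_cons, *]
  have y2 : ¬ G.Adj y b1 := by
    intro h
    have h' := h.symm
    rcases hy b1 sb1 h with h | rfl
    · exact k2.ne h
    refine hno (u :: (L1 ++ y :: v :: L2)) ?_ ?_ ?_
    · rw [List.perm_iff_count]; intro w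
      simp only [List.count_append, List.count_cons, List.count_nil]; omega
    · simp [List.isChain_append, List.isChain_cons, *]
    · simp [List.getLast?_append, List.getLast?_cons, *]
  have hxS : x ∉ S := (hP x).1 (List.mem_of_mem_head? hPx)
  have hyS : y ∉ S := (hP y).1 (List.mem_of_getLast? hPy)
  have nx : ∀ s ∈ S, x ≠ s := by rintro s hs rfl; exact hxS hs
  have ny : ∀ s ∈ S, y ≠ s := by rintro s hs rfl; exact hyS hs
  have cliqu : ∀ s ∈ S, ∀ t ∈ S, s ≠ t → G.Adj u s → G.Adj u t → ¬ G.Adj x s → ¬ G.Adj x t →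
      G.Adj s t := by
    intro s hs t ht hst h1 h2 h3 h4
    by_contra h5
    exact cf u x s t hux h1 h2 (nx s hs) (nx t ht) hst h3 h4 h5
  have cliqv : ∀ s ∈ S, ∀ t ∈ S, s ≠ t → G.Adj v s → G.Adj v t → ¬ G.Adj y s → ¬ G.Adj y t →
      G.Adj s t := by
    intro s hs t ht hst h1 h2 h3 h4
    by_contra h5
    exact cf v y s t hvy h1 h2 (ny s hs) (ny t ht) hst h3 h4 h5
  have k5 : G.Adj a1 b2 := cliqu _ sa1 _ sb2 d1 k1 k4' x1 x2
  have k6 : G.Adj b1 a2 := cliqv _ sb1 _ sa2 d2 k2' k3 y2 y1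
  obtain ⟨n1, n2, n3, n4, n5⟩ := cyc1 hno cP hPx hPy hux hvy c1 c2 e1 e2 e3 e4 k1 k2 k3 k4 k5 k6
  refine ⟨⟨a1, sa1, a2, sa2, k1, x1, k3, y1, n5⟩, ?_⟩
  intro z hz z1 z2 z3 z4
  have hz' := (hm z).2 hz
  simp only [List.mem_cons, List.mem_append] at hz'
  rcases hz' with h | h | h | h
  · exact z1.ne h.symm
  · refine cyc2 cf hno hn cP hPx hPy hux hvy c1 c2 e1 e2 e3 e4 k1 k2 k3 k4 k5 k6 h z1 z3 ?_
    exact cliqu _ sb2 _ hz (by grind) k4' z1 x2 z2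
  · exact z3.ne h.symm
  · refine cyc2 cf (P := P.reverse) (u := v) (v := u) (L1 := L2) (L2 := L1) (x := y) (y := x)
      ?_ ?_ (isChain_rev.2 cP) (by simp [hPy]) (by simp [hPx]) hvy hux c2 c1 e3 e4 e1 e2 k3 k4 k1 k2
      k6.symm k5.symm h z3 z1 ?_
    · intro l hl
      refine hno l (hl.trans ?_)
      rw [List.perm_iff_count]; intro w
      simp only [List.count_append, List.count_cons, List.count_reverse]; omega
    · have : (v :: (L2 ++ u :: L1)).Perm (u :: (L1 ++ v :: L2)) := by
        rw [List.perm_iff_count]; intro w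
        simp only [List.count_append, List.count_cons]; omega
      exact this.nodup_iff.2 hn
    · exact cliqv _ sb1 _ hz (by grind) k2' z3 y2 z4
end BW

namespace BW
variable {V : Type*} {G : SimpleGraph V}

def KK (G : SimpleGraph V) (x u p : V) : Prop := p ≠ x ∧ G.Adj u p ∧ ¬ G.Adj x p

/-- setting of the one-vertex case -/
structure One (G : SimpleGraph V) (x : V) : Prop where
  cf : CF G
  bf : BF G
  dj : ∀ u v z, G.Adj x u → G.Adj x v → u ≠ v → KK G x u z → G.Adj v z → False
  nc : ∀ u v, G.Adj x u → G.Adj x v → u ≠ v → ∃ p z, KK G x u p ∧ KK G x v z ∧ ¬ G.Adj p z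

variable {x : V}

theorem One.ne (h : One G x) {u v : V} (hu : G.Adj x u) (hv : G.Adj x v) (huv : u ≠ v) :
    ∃ p, KK G x u p := by
  obtain ⟨p, z, hp, _⟩ := h.nc u v hu hv huv
  exact ⟨p, hp⟩

theorem One.clique (h : One G x) {u p q : V} (hu : G.Adj x u) (hp : KK G x u p) (hq : KK G x u q)
    (hpq : p ≠ q) : G.Adj p q := by
  have := h.cf u x p q hu.symm hp.2.1 hq.2.1 hp.1.symm hq.1.symm hpq hp.2.2 hq.2.2
  tauto

/-- rule (*) -/
theorem One.star (h : One G x) {u v p w r : V} (hu : G.Adj x u) (hv : G.Adj x v) (huv : G.Adj u v)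
    (hp : KK G x u p) (hpw : G.Adj p w) (hwu : w ≠ u) (hw : ¬ G.Adj u w) (hr : KK G x v r) :
    G.Adj r p ∨ G.Adj r w ∨ G.Adj v w := by
  have d1 := h.dj u v p hu hv huv.ne hp
  have d2 := h.dj v u r hv hu huv.ne.symm hr
  have d3 := h.dj u w p hu
  have b := h.bf v u x r p w
  obtain ⟨p1, p2, p3⟩ := hp
  obtain ⟨r1, r2, r3⟩ := hr
  have := G.adj_comm
  grind (splitImp := true) [KK]

theorem One.tri (h : One G x) {u v t : V} (hu : G.Adj x u) (hv : G.Adj x v) (ht : G.Adj x t)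
    (huv : G.Adj u v) (hut : t ≠ u) (hvt : t ≠ v) : G.Adj t u ∧ G.Adj t v := by
  by_cases h1 : G.Adj t u
  · refine ⟨h1, ?_⟩
    by_contra h2
    obtain ⟨p, hp⟩ := h.ne hu hv huv.ne
    have d1 := h.dj u v p hu hv huv.ne hp
    have d2 := h.dj u t p hu ht hut.symm hp
    obtain ⟨p1, p2, p3⟩ := hp
    have := h.cf u v t p
    have := G.adj_comm
    grind (splitImp := true) [KK]
  · exfalso
    by_cases h2 : G.Adj t v
    · obtain ⟨p, hp⟩ := h.ne hv hu huv.ne.symm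
      have d1 := h.dj v u p hv hu huv.ne.symm hp
      have d2 := h.dj v t p hv ht hvt.symm hp
      obtain ⟨p1, p2, p3⟩ := hp
      have := h.cf v u t p
      have := G.adj_comm
      grind (splitImp := true) [KK]
    · have key : ∀ u v, G.Adj x u → G.Adj x v → G.Adj u v → t ≠ u → t ≠ v → ¬ G.Adj t u → 
          ¬ G.Adj t v → ∀ p r, KK G x u p → KK G x t r → G.Adj p r := by
        clear h1 h2 hut hvt huv hu hv u v
        intro u v hu hv huv hut hvt h1 h2 p r hp hr
        have b := h.bf u x v p t r
        have d1 := h.dj u v p hu hv huv.ne hp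
        have d2 := h.dj u t p hu ht hut.symm hp
        have d3 := h.dj t u r ht hu hut hr
        have d4 := h.dj t v r ht hv hvt hr
        obtain ⟨p1, p2, p3⟩ := hp
        obtain ⟨r1, r2, r3⟩ := hr
        have := G.adj_comm
        grind (splitImp := true) [KK]
      obtain ⟨p, z, hp, hz, hpz⟩ := h.nc u v hu hv huv.ne
      obtain ⟨r, hr⟩ := h.ne ht hu hut
      have k1 := key u v hu hv huv hut hvt h1 h2 p r hp hr
      have k2 := key v u hv hu huv.symm hvt hut h2 h1 z r hz hr
      have b := h.cf r t p z
      have d1 := h.dj u v p hu hv huv.ne hp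
      have d2 := h.dj u t p hu ht hut.symm hp
      have d3 := h.dj v t z hv ht hvt.symm hz
      obtain ⟨p1, p2, p3⟩ := hp
      obtain ⟨p1, p2, p3⟩ := hz
      obtain ⟨r1, r2, r3⟩ := hr
      have := G.adj_comm
      grind (splitImp := true) [KK]

/-- an edge between two classes extends to the third -/
theorem One.ext (h : One G x) {u v t p z r : V} (hu : G.Adj x u) (hv : G.Adj x v) (ht : G.Adj x t)
    (huv : G.Adj u v) (htu : G.Adj t u) (htv : G.Adj t v) (hp : KK G x u p) (hz : KK G x v z)
    (hr : KK G x t r) (hpz : G.Adj p z) : G.Adj r p ∧ G.Adj r z := by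
  have s := fun a b => h.star hv ht htv.symm hz hpz.symm a b hr
  have d1 := h.dj u v p hu hv huv.ne hp
  have d2 := h.dj u t p hu ht htu.ne.symm hp
  have d3 := h.dj v t z hv ht htv.ne.symm hz
  have d4 := h.dj v u z hv hu huv.ne.symm hz
  have d5 := h.dj t u r ht hu htu.ne hr
  have d6 := h.dj t v r ht hv htv.ne hr
  have c1 := h.cf p u z r
  have c2 := h.cf z v p r
  obtain ⟨p1, p2, p3⟩ := hp
  obtain ⟨p1, p2, p3⟩ := hz
  obtain ⟨r1, r2, r3⟩ := hr
  have := G.adj_comm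
  grind (splitImp := true) [KK]

theorem One.noedge (h : One G x) {u v t p z : V} (hu : G.Adj x u) (hv : G.Adj x v) (ht : G.Adj x t)
    (huv : G.Adj u v) (htu : G.Adj t u) (htv : G.Adj t v) (hp : KK G x u p) (hz : KK G x v z)
    : ¬ G.Adj p z := by
  intro hpz
  obtain ⟨r, hr⟩ := h.ne ht hu htu.ne
  obtain ⟨a, b, ha, hb, hab⟩ := h.nc u v hu hv huv.ne
  have e1 := h.ext hu hv ht huv htu htv hp hz hr hpz
  -- r~p, get b ~ p, b ~ r
  have e2 := h.ext hu ht hv htu.symm huv.symm htv.symm hp hr hb e1.1.symm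
  have e3 := h.ext hv ht hu htv.symm huv htu.symm hb hr ha e2.2
  exact hab e3.1

/-- at most two neighbours if two are adjacent -/
theorem One.two (h : One G x) (hc : ∀ w, ConnS G {w}ᶜ) {u v t : V} (hu : G.Adj x u)
    (hv : G.Adj x v) (ht : G.Adj x t)
    (huv : G.Adj u v) (hut : t ≠ u) (hvt : t ≠ v) : False := by
  obtain ⟨htu, htv⟩ := h.tri hu hv ht huv hut hvt
  obtain ⟨p0, hp0⟩ := h.ne hu hv huv.ne
  obtain ⟨r, hr⟩ := h.ne hv hu huv.ne.symm
  obtain ⟨s, hs⟩ := h.ne ht hu hut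
  obtain ⟨p, hp, w, hw, hpw⟩ := hc u {p | KK G x u p} (by rintro p hp rfl; exact G.irrefl hp.2.1)
    ⟨p0, hp0⟩ ⟨x, by simpa using hu.ne, by simp [KK]⟩
  simp only [Set.mem_sdiff, Set.mem_compl_iff, Set.mem_singleton_iff, Set.mem_ofPred_eq] at hw hp
  have n1 := h.noedge hu hv ht huv htu htv hp hr
  have n2 := h.noedge hu ht hv htu.symm huv.symm htv.symm hp hs
  have n3 := h.noedge hv ht hu htv.symm huv htu.symm hr hs
  have d0 := h.dj u w p hu
  have nw : ¬ G.Adj u w := by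
    intro huw
    obtain ⟨w1, w2⟩ := hw
    simp only [KK] at w2 d0
    obtain ⟨q1, q2, q3⟩ := hp
    have := G.adj_comm
    grind (splitImp := true) [KK]
  have s1 := h.star hu hv huv hp hpw hw.1 nw hr
  have s2 := h.star hu ht htu.symm hp hpw hw.1 nw hs
  have n4 := fun hv' : KK G x v w => h.noedge hu hv ht huv htu htv hp hv' hpw
  have n5 := fun hv' : KK G x t w => h.noedge hu ht hv htu.symm huv.symm htv.symm hp hv' hpw
  have d1 := h.dj v t r hv ht hvt.symm hr
  have d2 := h.dj u v p hu hv huv.ne hp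
  have d3 := h.dj u t p hu ht hut.symm hp
  have c := h.cf w p r s
  obtain ⟨w1, w2⟩ := hw
  simp only [KK] at *
  have := G.adj_comm
  grind (splitImp := true) [KK]
end BW

namespace BW
variable {V : Type*} {G : SimpleGraph V} {x : V}

def WW (G : SimpleGraph V) (x u v w : V) : Prop :=
  w ≠ x ∧ w ≠ u ∧ w ≠ v ∧ ¬ KK G x u w ∧ ¬ KK G x v w ∧ ∀ q, KK G x u q ∨ KK G x v q → G.Adj q w

theorem One.all (h : One G x) (hc : ConnS G Set.univ) {u v : V} (hu : G.Adj x u)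
    (hv : G.Adj x v) (huv : u ≠ v) (hxx : ∀ t, G.Adj x t → t = u ∨ t = v)
    (hW : ∀ w p, w ≠ x → w ≠ u → w ≠ v → ¬ KK G x u w → ¬ KK G x v w → (KK G x u p ∨ KK G x v p) →
      G.Adj p w → WW G x u v w) (y : V) :
    y = x ∨ y = u ∨ y = v ∨ KK G x u y ∨ KK G x v y ∨ WW G x u v y := by
  by_contra hy
  obtain ⟨a, ha, b, hb, hab⟩ := hc {y | y = x ∨ y = u ∨ y = v ∨ KK G x u y ∨ KK G x v y ∨ WW G x u v y}
    (by simp) ⟨x, by simp⟩ ⟨y, by simpa using hy⟩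
  simp only [Set.mem_sdiff, Set.mem_univ, true_and, Set.mem_ofPred_eq, not_or] at ha hb
  obtain ⟨b1, b2, b3, b4, b5, b6⟩ := hb
  have hxb := hxx b
  have hWb := fun p => hW b p b1 b2 b3 b4 b5
  rcases ha with rfl | rfl | rfl | ha | ha | ha
  · grind
  · grind [KK]
  · grind [KK]
  · exact b6 (hWb a (Or.inl ha) hab)
  · exact b6 (hWb a (Or.inr ha) hab)
  · obtain ⟨p, hp⟩ := h.ne hu hv huv
    obtain ⟨z, hz⟩ := h.ne hv hu huv.symm
    obtain ⟨a1, a2, a3, a4, a5, a6⟩ := ha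
    have k1 := a6 p (Or.inl hp)
    have k2 := a6 z (Or.inr hz)
    have k3 := fun k => b6 (hWb p (Or.inl hp) k)
    have k4 := fun k => b6 (hWb z (Or.inr hz) k)
    have d1 := h.dj v u z hv hu huv.symm hz
    have c1 := h.bf a p z b u x
    have c2 := h.cf a p z b
    have hxa := hxx a
    have d2 := h.dj u v p hu hv huv hp
    clear hWb hxx hW a6 b6
    have := G.adj_comm
    grind (splitImp := true) [KK]

theorem One.zpath [Fintype V] (h : One G x) (hc : ConnS G Set.univ) (hc' : ∀ w, ConnS G {w}ᶜ) {u v : V} (hu : G.Adj x u)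
    (hv : G.Adj x v) (huv : u ≠ v) (hxx : ∀ t, G.Adj x t → t = u ∨ t = v)
    (hW : ∀ w p, w ≠ x → w ≠ u → w ≠ v → ¬ KK G x u w → ¬ KK G x v w → (KK G x u p ∨ KK G x v p) →
      G.Adj p w → WW G x u v w) : HPath G {x}ᶜ u v := by
  classical
  have all := h.all hc hu hv huv hxx hW
  have cu := fun p q => h.clique (p := p) (q := q) hu
  have cv := fun p q => h.clique (p := p) (q := q) hv
  have dj := fun p => h.dj u v p hu hv huv
  have dj' := fun p => h.dj v u p hv hu huv.symm
  obtain ⟨p, hp⟩ := h.ne hu hv huv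
  obtain ⟨z, hz⟩ := h.ne hv hu huv.symm
  have hKu : ∀ p, KK G x u p → p ≠ u ∧ p ≠ v ∧ p ≠ x ∧ G.Adj u p ∧ ¬ KK G x v p := by
    intro p hp; have := dj p hp; have := G.adj_comm; grind [KK]
  have hKv : ∀ p, KK G x v p → p ≠ u ∧ p ≠ v ∧ p ≠ x ∧ G.Adj v p ∧ ¬ KK G x u p := by
    intro p hp; have := dj' p hp; have := G.adj_comm; grind [KK]
  by_cases hw : ∃ w, WW G x u v w
  · obtain ⟨w0, hw0⟩ := hw
    have cw : ∀ w w', WW G x u v w → WW G x u v w' → w ≠ w' → G.Adj w w' := by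
      intro w w' h1 h2 hne
      obtain ⟨a1, a2, a3, a4, a5, a6⟩ := h1
      obtain ⟨b1, b2, b3, b4, b5, b6⟩ := h2
      have k1 := a6 p (Or.inl hp)
      have k2 := b6 p (Or.inl hp)
      have e1 := hxx w
      have e2 := hxx w'
      have c := h.cf p u w w'
      clear all cu cv dj dj' hKu hKv hxx hW a6 b6
      have := G.adj_comm
      grind (splitImp := true) [KK]
    refine rank_path {x}ᶜ (fun y => if y = u then 0 else if y = v then 4 else if KK G x u y then 1 else
      if KK G x v y then 3 else 2) u v (by simpa using hu.ne.symm) (by simpa using hv.ne.symm) ?_ ?_ ?_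
    · intro y _ hy; simp only [hy]; grind
    · intro y _ hy; simp only [hy]; grind
    · intro y hy y' hy' hne hle hbet
      have bp := hbet p (by simpa using hp.1)
      have bz := hbet z (by simpa using hz.1)
      have bw := hbet w0 (by simpa using hw0.1)
      have A := all y
      have A' := all y'
      have k1 := cu y y'
      have k2 := cv y y'
      have k3 := cw y y'
      have q0 := hKu p hp
      have q1 := hKv z hz
      have q2 := hKu y
      have q3 := hKu y'
      have q4 := hKv y
      have q5 := hKv y'
      simp only [WW] at *
      obtain ⟨a1, a2, a3, a4, a5, a6⟩ := hw0
      clear hW hbet all cu cv dj dj' cw hc hc' hKu hKv hxx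
      have := G.adj_comm
      simp only [Set.mem_compl_iff, Set.mem_singleton_iff] at hy hy'
      rcases A with A | A | A | A | A | A
      · exact absurd A hy
      · rcases A' with A' | A' | A' | A' | A' | A' <;> grind
      · rcases A' with A' | A' | A' | A' | A' | A' <;> grind
      · rcases A' with A' | A' | A' | A' | A' | A' <;> grind
      · rcases A' with A' | A' | A' | A' | A' | A' <;> grind
      · rcases A' with A' | A' | A' | A' | A' | A' <;> grind
  · push Not at hw
    obtain ⟨p0, hp0, z0, hz0, e0⟩ := hc' u {p | KK G x u p} (by rintro p hp rfl; exact G.irrefl hp.2.1)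
      ⟨p, hp⟩ ⟨x, by simpa using hu.ne, by simp [KK]⟩
    simp only [Set.mem_sdiff, Set.mem_compl_iff, Set.mem_singleton_iff, Set.mem_ofPred_eq] at hz0 hp0
    have hz0 : KK G x v z0 := by
      have := all z0
      have := hw z0
      have := dj p0 hp0
      have := hp0.2.2
      have := G.adj_comm
      grind
    refine rank_path {x}ᶜ (fun y => if y = u then 0 else if y = v then 5 else if y = p0 then 2 else
      if y = z0 then 3 else if KK G x u y then 1 else 4) u v
      (by simpa using hu.ne.symm) (by simpa using hv.ne.symm) ?_ ?_ ?_
    · intro y _ hy; simp only [hy]; grind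
    · intro y _ hy; simp only [hy]; grind
    · intro y hy y' hy' hne hle hbet
      have bp := hbet p0 (by simpa using hp0.1)
      have bz := hbet z0 (by simpa using hz0.1)
      have A := all y
      have A' := all y'
      have k1 := cu y y'
      have k2 := cv y y'
      have k3 := hw y
      have k4 := hw y'
      have q0 := hKu p0 hp0
      have q1 := hKv z0 hz0
      have q2 := hKu y
      have q3 := hKu y'
      have q4 := hKv y
      have q5 := hKv y'
      clear hW hbet all cu cv dj dj' hc hc' hKu hKv hxx hw
      have := G.adj_comm
      simp only [Set.mem_compl_iff, Set.mem_singleton_iff] at hy hy'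
      rcases A with A | A | A | A | A | A
      · exact absurd A hy
      · rcases A' with A' | A' | A' | A' | A' | A' <;> grind
      · rcases A' with A' | A' | A' | A' | A' | A' <;> grind
      · rcases A' with A' | A' | A' | A' | A' | A' <;> grind
      · rcases A' with A' | A' | A' | A' | A' | A' <;> grind
      · exact absurd A k3
end BW

namespace BW
variable {V : Type*} {G : SimpleGraph V} {x : V}

theorem One.finish [Fintype V] (h : One G x) (hc : ConnS G Set.univ) (hc' : ∀ w, ConnS G {w}ᶜ)
    {u v : V} (hu : G.Adj x u) (hv : G.Adj x v) (huv : u ≠ v) : Ham G Set.univ := by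
  suffices ∃ u v, G.Adj x u ∧ G.Adj x v ∧ HPath G {x}ᶜ u v by
    obtain ⟨u, v, hu, hv, hp⟩ := this
    exact close_path (P := [x]) hp (by simp) (by simp) (by simp) (by simp) (by simp) hu.symm hv.symm
  by_cases ha : ∃ u v, G.Adj x u ∧ G.Adj x v ∧ G.Adj u v
  · obtain ⟨u, v, hu, hv, huv⟩ := ha
    have hxx : ∀ t, G.Adj x t → t = u ∨ t = v := by
      intro t ht
      by_contra hcon
      push Not at hcon
      exact h.two hc' hu hv ht huv hcon.1 hcon.2
    refine ⟨u, v, hu, hv, h.zpath hc hc' hu hv huv.ne hxx ?_⟩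
    have key : ∀ u v, G.Adj x u → G.Adj x v → G.Adj u v → (∀ t, G.Adj x t → t = u ∨ t = v) →
        ∀ w p, w ≠ x → w ≠ u → w ≠ v → ¬ KK G x u w → ¬ KK G x v w → KK G x u p →
        G.Adj p w → ∀ q, KK G x v q → G.Adj q w := by
      clear hxx huv hv hu u v
      intro u v hu hv huv hxx w p w1 w2 w3 w4 w5 hp hpw q hq
      have e := hxx w
      have s := fun a => h.star hu hv huv hp hpw w2 a hq
      have d1 := h.dj v u q hv hu huv.ne.symm hq
      have d2 := h.dj u v p hu hv huv.ne hp
      have c := h.cf p u q w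
      have := G.adj_comm
      grind (splitImp := true) [KK]
    intro w p w1 w2 w3 w4 w5 hp hpw
    obtain ⟨p0, hp0⟩ := h.ne hu hv huv.ne
    obtain ⟨z0, hz0⟩ := h.ne hv hu huv.ne.symm
    have k1 := fun p => key u v hu hv huv hxx w p w1 w2 w3 w4 w5
    have k2 := fun p => key v u hv hu huv.symm (fun t ht => (hxx t ht).symm) w p w1 w3 w2 w5 w4
    refine ⟨w1, w2, w3, w4, w5, fun q hq => ?_⟩
    rcases hp with hp | hp
    · rcases hq with hq | hq
      · exact k2 z0 hz0 (k1 p hp hpw z0 hz0) q hq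
      · exact k1 p hp hpw q hq
    · rcases hq with hq | hq
      · exact k2 p hp hpw q hq
      · exact k1 p0 hp0 (k2 p hp hpw p0 hp0) q hq
  · push Not at ha
    have hxx : ∀ t, G.Adj x t → t = u ∨ t = v := by
      intro t ht
      by_contra hcon
      push Not at hcon
      exact h.cf x u v t hu hv ht huv hcon.1.symm hcon.2.symm (ha _ _ hu hv) (ha _ _ hu ht)
        (ha _ _ hv ht)
    have nuv := ha _ _ hu hv
    refine ⟨u, v, hu, hv, ?_⟩
    have hKK : ∀ u y, G.Adj x u → y ∈ ({x}ᶜ : Set V) → G.Adj u y → KK G x u y :=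
      fun u y hu hy huy => ⟨hy, huy, fun k => ha _ _ hu k huy⟩
    by_cases he : ∃ p0 z0, KK G x u p0 ∧ KK G x v z0 ∧ G.Adj p0 z0
    · obtain ⟨p0, z0, hp0, hz0, e0⟩ := he
      refine h.zpath hc hc' hu hv huv hxx ?_
      have key : ∀ u v p0 z0, G.Adj x u → G.Adj x v → u ≠ v → ¬ G.Adj u v → KK G x u p0 →
        KK G x v z0 → G.Adj p0 z0 → (∀ t, G.Adj x t → t = u ∨ t = v) →
        ∀ w p, w ≠ x → w ≠ u → w ≠ v → ¬ KK G x u w → ¬ KK G x v w → KK G x u p →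
        G.Adj p w → (∀ q, KK G x u q → G.Adj q w) ∧ G.Adj z0 w := by
        clear! u v
        intro u v p0 z0 hu hv huv nuv hp0 hz0 e0 hxx w p w1 w2 w3 w4 w5 hp hpw
        have e := hxx w
        have A : ∀ q, KK G x u q → G.Adj q w := by
          intro q hq
          have b := h.bf p u q w x v
          have d1 := h.dj u v q hu hv huv hq
          have d2 := h.dj u v p hu hv huv hp
          have cl := h.clique hu hp hq
          have := G.adj_comm
          clear hxx
          grind (splitImp := true) [KK]
        refine ⟨A, ?_⟩
        have A0 := A p0 hp0
        have c := h.cf p0 u z0 w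
        have d1 := h.dj v u z0 hv hu huv.symm hz0
        have := G.adj_comm
        clear hxx
        grind (splitImp := true) [KK]
      intro w p w1 w2 w3 w4 w5 hp hpw
      have k1 := fun p => key u v p0 z0 hu hv huv nuv hp0 hz0 e0 hxx w p w1 w2 w3 w4 w5
      have k2 := fun p => key v u z0 p0 hv hu huv.symm (fun k => nuv k.symm) hz0 hp0 e0.symm
        (fun t ht => (hxx t ht).symm) w p w1 w3 w2 w5 w4
      refine ⟨w1, w2, w3, w4, w5, fun q hq => ?_⟩
      rcases hp with hp | hp
      · obtain ⟨r1, r2⟩ := k1 p hp hpw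
        rcases hq with hq | hq
        · exact r1 q hq
        · exact (k2 z0 hz0 r2).1 q hq
      · obtain ⟨r1, r2⟩ := k2 p hp hpw
        rcases hq with hq | hq
        · exact (k1 p0 hp0 r2).1 q hq
        · exact r1 q hq
    · push Not at he
      refine layer_path h.cf h.bf (x1 := x) (x2 := v) (hc' x) hu.ne.symm hv.ne.symm huv hu.symm hv nuv
        ?_ ?_ ?_ ?_ ?_
      · intro y hy y' hy' hne a b
        exact h.clique hu (hKK u y hu hy a) (hKK u y' hu hy' b) hne
      · intro y hy y' hy' hne a b
        exact h.clique hv (hKK v y hv hy a) (hKK v y' hv hy' b) hne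
      · intro y hy a
        have := hKK u y hu hy a
        exact ⟨this.2.2, h.dj u v y hu hv huv this⟩
      · intro p hp y hy hup hpy hyu huy
        have k := hKK u p hu hp hup
        have hn : ¬ G.Adj x y := by
          intro k'
          exact h.dj u y p hu k' hyu.symm k hpy.symm
        exact ⟨hn, fun k' => he p y k (hKK v y hv hy k') hpy⟩
      · intro p hp w hw y hy hup hpw hwy hyu k'
        have k := hKK u p hu hp hup
        rcases hxx y k' with rfl | rfl
        · exact hyu rfl
        · exact he p w k (hKK _ w hv hw hwy.symm) hpw

theorem one_case [Fintype V] (cf : CF G) (bf : BF G) (hc : ConnS G Set.univ)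
    (hc' : ∀ w, ConnS G {w}ᶜ) (hS : Ham G {x}ᶜ) {u v : V} (hu : G.Adj x u) (hv : G.Adj x v)
    (huv : u ≠ v) : Ham G Set.univ := by
  by_contra noham
  have key := fun (u v : V) (hu : G.Adj x u) (hv : G.Adj x v) (huv : u ≠ v) =>
    cyc_main (P := [x]) (x := x) (y := x) cf hS noham (by simp) (by simp) (by simp) (by simp) (by simp)
      (u := u) (v := v) hu.ne.symm hv.ne.symm huv hu.symm hv.symm (by simp) (by simp)
  refine noham (One.finish (x := x) ⟨cf, bf, ?_, ?_⟩ hc hc' hu hv huv)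
  · intro u v z hu hv huv hz hvz
    exact (key u v hu hv huv).2 z hz.1 hz.2.1 hz.2.2 hvz hz.2.2
  · intro u v hu hv huv
    obtain ⟨p, hp, z, hz, h1, h2, h3, h4, h5⟩ := (key u v hu hv huv).1
    exact ⟨p, z, ⟨hp, h1, h2⟩, ⟨hz, h3, h4⟩, h5⟩

/-- long ears -/
theorem long_case [Fintype V] (cf : CF G) (bf : BF G) {S : Set V} (hS : Ham G S) (cS : ConnS G S)
    {P : List V} {x1 x2 xr u v : V} (hPn : P.Nodup) (hP : ∀ w, w ∈ P ↔ w ∉ S)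
    (cP : P.IsChain G.Adj) (hPx : P.head? = some x1) (hPy : P.getLast? = some xr)
    (h12 : G.Adj x1 x2)
    (hu : u ∈ S) (hv : v ∈ S) (huv : u ≠ v) (hux : G.Adj u x1) (hvy : G.Adj v xr)
    (hx : ∀ s ∈ S, G.Adj x1 s → s = u) (hy : ∀ s ∈ S, G.Adj xr s → s = v)
    (hx2s : ∀ s ∈ S, G.Adj x2 s → s = v) : Ham G Set.univ := by
  by_contra noham
  obtain ⟨⟨p, hp, z, hz, h1, h2, h3, h4, h5⟩, dj⟩ := cyc_main cf hS noham hPn hP cP hPx hPy hu hv huv hux hvy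
    (fun s hs h => Or.inl (hx s hs h)) (fun s hs h => Or.inl (hy s hs h))
  have mx1 : x1 ∉ S := (hP _).1 (List.mem_of_mem_head? hPx)
  have mxr : xr ∉ S := (hP _).1 (List.mem_of_getLast? hPy)
  have Ku : ∀ y ∈ S, G.Adj u y → ¬ G.Adj x1 y := by
    intro y hy h h'
    have := hx y hy h'
    subst this; exact G.irrefl h
  have Kv : ∀ z ∈ S, G.Adj v z → ¬ G.Adj xr z := by
    intro z hz h h'
    have := hy z hz h'
    subst this; exact G.irrefl h
  have dj' : ∀ z ∈ S, G.Adj u z → ¬ G.Adj v z := fun z hz h h' =>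
    dj z hz h (Ku z hz h) h' (Kv z hz h')
  have cu : ∀ y ∈ S, ∀ y' ∈ S, y ≠ y' → G.Adj u y → G.Adj u y' → G.Adj y y' := by
    intro y hy y' hy' hne h h'
    by_contra k
    exact cf u x1 y y' hux h h' (fun e => mx1 (e ▸ hy)) (fun e => mx1 (e ▸ hy')) hne (Ku y hy h)
      (Ku y' hy' h') k
  have cv : ∀ y ∈ S, ∀ y' ∈ S, y ≠ y' → G.Adj v y → G.Adj v y' → G.Adj y y' := by
    intro y hy y' hy' hne h h'
    by_contra k
    exact cf v xr y y' hvy h h' (fun e => mxr (e ▸ hy)) (fun e => mxr (e ▸ hy')) hne (Kv y hy h)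
      (Kv y' hy' h') k
  have nuv : ¬ G.Adj u v := by
    intro h
    have hpv : p ≠ v := by rintro rfl; exact h5 h3
    exact dj' p hp h1 (cu v hv p hp hpv.symm h h1)
  refine noham (close_path (layer_path cf bf (x1 := x1) (x2 := x2) cS hu hv huv hux h12 ?_ cu cv ?_ ?_ ?_)
    hPn hP cP hPx hPy hux hvy)
  · intro k; exact huv (hx2s u hu k.symm)
  · intro y hy h
    refine ⟨Ku y hy h, fun k => ?_⟩
    have := hx2s y hy k
    subst this; exact nuv h
  · intro p hp y hy hup hpy hyu huy
    refine ⟨fun k => hyu (hx y hy k), fun k => ?_⟩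
    have := hx2s y hy k
    subst this; exact dj' p hp hup hpy.symm
  · intro p hp w hw y hy hup hpw hwy hyu k
    exact hyu (hx y hy k)
end BW

namespace BW
section
variable {V : Type*} {G : SimpleGraph V} {x : V}

theorem conn_insert {A : Set V} {a y : V} (hA : ConnS G A) (ha : a ∈ A) (hay : G.Adj a y) :
    ConnS G (insert y A) := by
  intro T hT hne hc
  by_cases hyA : y ∈ A
  · rw [Set.insert_eq_of_mem hyA] at hT hc ⊢
    exact hA T hT hne hc
  by_cases hy : y ∈ T
  · by_cases haT : a ∈ T
    · obtain ⟨c, hc1, hc2⟩ := hc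
      obtain ⟨p, hp, q, hq, e⟩ := hA (T ∩ A) Set.inter_subset_right ⟨a, haT, ha⟩
        ⟨c, by grind⟩
      exact ⟨p, hp.1, q, by grind, e⟩
    · exact ⟨y, hy, a, by grind, hay.symm⟩
  · by_cases haT : a ∈ T
    · exact ⟨a, haT, y, by grind, hay⟩
    · obtain ⟨p, hp, q, hq, e⟩ := hA T (by grind) hne ⟨a, by grind⟩
      exact ⟨p, hp, q, by grind, e⟩

theorem conn_chain {l : List V} : ∀ {A : Set V}, ConnS G A → l.IsChain G.Adj →
    (∀ y ∈ l.head?, ∃ a ∈ A, G.Adj a y) → ConnS G (A ∪ {z | z ∈ l}) := by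
  induction l with
  | nil => intro A hA _ _; simpa using hA
  | cons y t ih =>
    intro A hA hc hh
    obtain ⟨a, ha, hay⟩ := hh y (by simp)
    have h1 := conn_insert hA ha hay
    rw [List.isChain_cons] at hc
    have := ih h1 hc.2 (fun z hz => ⟨y, by simp, hc.1 z hz⟩)
    convert this using 1
    ext z; simp; tauto

def TCS (G : SimpleGraph V) (S : Set V) : Prop := ConnS G S ∧ ∀ v ∈ S, ConnS G (S \ {v})

theorem tcs_ear {S : Set V} (hS : TCS G S) {P : List V} {x y u v : V} (hn : P.Nodup)
    (hP : ∀ w ∈ P, w ∉ S)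
    (cP : P.IsChain G.Adj) (hx : P.head? = some x) (hy : P.getLast? = some y) (hu : u ∈ S) (hv : v ∈ S)
    (huv : u ≠ v) (hux : G.Adj u x) (hvy : G.Adj v y) : TCS G (S ∪ {z | z ∈ P}) := by
  refine ⟨conn_chain hS.1 cP (fun z hz => ?_), ?_⟩
  · rw [hx] at hz; cases hz; exact ⟨u, hu, hux⟩
  intro w hw
  by_cases hwS : w ∈ S
  · have hwP : w ∉ P := fun k => hP w k hwS
    have e : (S ∪ {z | z ∈ P}) \ {w} = (S \ {w}) ∪ {z | z ∈ P} := by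
      ext z; simp; grind
    rw [e]
    by_cases hwu : w = u
    · subst hwu
      have := conn_chain (l := P.reverse) (hS.2 w hwS) (isChain_rev.2 cP) (fun z hz => by
        rw [List.head?_reverse, hy] at hz; cases hz; exact ⟨v, ⟨hv, huv.symm⟩, hvy⟩)
      simpa using this
    · exact conn_chain (hS.2 w hwS) cP (fun z hz => by
        rw [hx] at hz; cases hz; exact ⟨u, ⟨hu, fun k => hwu k.symm⟩, hux⟩)
  · have hwP : w ∈ P := by simpa [hwS] using hw
    obtain ⟨A, B, rfl⟩ := List.append_of_mem hwP
    rw [List.isChain_append] at cP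
    obtain ⟨cA, cB, -⟩ := cP
    rw [List.isChain_cons] at cB
    have h1 := conn_chain hS.1 cA (fun z hz => by
      cases A with
      | nil => simp at hz
      | cons c A => simp at hx hz; subst hx; subst hz; exact ⟨u, hu, hux⟩)
    have h2 := conn_chain (l := B.reverse) h1 (isChain_rev.2 cB.2) (fun z hz => by
      rcases List.eq_nil_or_concat B with rfl | ⟨B', c, rfl⟩
      · simp at hz
      · simp [List.getLast?_append, List.getLast?_cons] at hy hz; subst hy; subst hz
        exact ⟨v, Or.inl hv, hvy⟩)
    convert h2 using 1
    ext z
    simp [List.nodup_append, List.nodup_cons] at hn ⊢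
    grind

/-- an ear of `S` -/
def Ear (G : SimpleGraph V) (S : Set V) (P : List V) (x y u v : V) : Prop :=
  P.Nodup ∧ (∀ w ∈ P, w ∉ S) ∧ P.IsChain G.Adj ∧ P.head? = some x ∧ P.getLast? = some y ∧ u ∈ S ∧ v ∈ S ∧
    u ≠ v ∧ G.Adj u x ∧ G.Adj v y

theorem exists_ear {S : Set V} (hc : ConnS G Set.univ) (hc' : ∀ w, ConnS G {w}ᶜ) {a b c : V}
    (ha : a ∈ S) (hb : b ∈ S) (hab : a ≠ b) (hcS : c ∉ S) : ∃ P x y u v, Ear G S P x y u v := by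
  obtain ⟨u, hu, x, hx, hux⟩ := hc S (by simp) ⟨a, ha⟩ ⟨c, by simp [hcS]⟩
  have hx : x ∉ S := hx.2
  let R : Set V := {y | ∃ P : List V, P.Nodup ∧ (∀ w ∈ P, w ∉ S) ∧ P.IsChain G.Adj ∧
    P.head? = some x ∧ P.getLast? = some y}
  have hRS : ∀ y ∈ R, y ∉ S := by
    rintro y ⟨P, h1, h2, h3, h4, h5⟩
    exact h2 y (List.mem_of_getLast? h5)
  obtain ⟨d, hd, hdu⟩ : ∃ d ∈ S, d ≠ u := by
    by_cases h : a = u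
    · exact ⟨b, hb, by grind⟩
    · exact ⟨a, ha, h⟩
  obtain ⟨y, hy, v, hv, hyv⟩ := hc' u R (fun y hy => by
      rintro rfl; exact hRS _ hy hu) ⟨x, [x], by simp, by simpa using hx, by simp, by simp, by simp⟩
      ⟨d, by simpa using hdu, fun k => hRS _ k hd⟩
  obtain ⟨P, h1, h2, h3, h4, h5⟩ := hy
  have hvu : v ≠ u := hv.1
  by_cases hvS : v ∈ S
  · exact ⟨P, x, y, u, v, h1, h2, h3, h4, h5, hu, hvS, hvu.symm, hux, hyv.symm⟩
  · exfalso
    apply hv.2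
    by_cases hvP : v ∈ P
    · obtain ⟨A, B, rfl⟩ := List.append_of_mem hvP
      refine ⟨A ++ [v], ?_, ?_, ?_, ?_, by simp⟩
      · exact h1.sublist (by simp)
      · intro w hw; exact h2 w (by simp at hw ⊢; tauto)
      · have e : A ++ v :: B = (A ++ [v]) ++ B := by simp
        rw [e, List.isChain_append] at h3
        exact h3.1
      · cases A <;> simpa using h4
    · refine ⟨P ++ [v], ?_, ?_, ?_, ?_, by simp⟩
      · simp [List.nodup_append, h1]; rintro a ha rfl; exact hvP ha
      · simp; rintro w (hw | rfl); exacts [h2 w hw, hvS]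
      · simp [List.isChain_append, h3, h5]; exact hyv
      · simp [List.head?_append, h4]

theorem ear_ham [Fintype V] (cf : CF G) (bf : BF G) (hc : ConnS G Set.univ) (hc' : ∀ w, ConnS G {w}ᶜ)
    {S : Set V} (hS : TCS G S) (hH : Ham G S) (hmax : ∀ S', S ⊆ S' → S ≠ S' → TCS G S' → S' = Set.univ)
    {a b c : V}
    (ha : a ∈ S) (hb : b ∈ S) (hab : a ≠ b) (hcS : c ∉ S) : Ham G Set.univ := by
  classical
  have hex : ∃ n, ∃ P : List V, P.length = n ∧ ∃ x y u v, Ear G S P x y u v := by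
    obtain ⟨P, h⟩ := exists_ear hc hc' ha hb hab hcS
    exact ⟨_, P, rfl, h⟩
  obtain ⟨P, hlen, x, y, u, v, h1, h2, h3, h4, h5, hu, hv, huv, hux, hvy⟩ := Nat.find_spec hex
  have hmin : ∀ Q x y u v, Ear G S Q x y u v → P.length ≤ Q.length := by
    intro Q x y u v hQ
    rw [hlen]
    exact Nat.find_min' hex ⟨Q, rfl, x, y, u, v, hQ⟩
  clear hlen
  have hxP : x ∈ P := List.mem_of_mem_head? h4
  have hyP : y ∈ P := List.mem_of_getLast? h5
  have hun := hmax _ Set.subset_union_left (fun e => h2 x hxP (by rw [e]; exact Or.inr hxP))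
    (tcs_ear hS h1 h2 h3 h4 h5 hu hv huv hux hvy)
  have hP : ∀ w, w ∈ P ↔ w ∉ S := by
    intro w
    refine ⟨h2 w, fun k => ?_⟩
    have : w ∈ S ∪ {z | z ∈ P} := by rw [hun]; trivial
    exact this.resolve_left k
  match P, h4 with
  | [x'], h4 =>
    simp at h4 h5
    subst h4; subst h5
    have e : S = {x'}ᶜ := by
      ext w; have := hP w; simp at this ⊢; tauto
    subst e
    exact one_case cf bf hc hc' hH hux.symm hvy.symm huv
  | x' :: x2 :: t, h4 =>
    simp only [List.head?_cons, Option.some.injEq] at h4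
    subst h4
    refine long_case cf bf hH hS.1 (x2 := x2) h1 hP h3 rfl h5 (List.isChain_cons_cons.1 h3).1 hu hv huv hux hvy
      ?_ ?_ ?_
    · intro s hs hxs
      by_contra hne
      have := hmin [x'] x' x' s u ⟨by simp, by simpa using h2 x' hxP, by simp, by simp, by simp, hs, hu,
        hne, hxs.symm, hux⟩
      simp at this
    · intro s hs hxs
      by_contra hne
      have := hmin [y] y y s v ⟨by simp, by simpa using h2 y hyP, by simp, by simp, by simp, hs, hv,
        hne, hxs.symm, hvy⟩
      simp at this
    · intro s hs hxs
      by_contra hne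
      have := hmin (x2 :: t) x2 y s v ⟨(List.nodup_cons.1 h1).2, fun w hw => h2 w (by simp at hw ⊢; tauto),
        (List.isChain_cons_cons.1 h3).2, by simp, by simpa using h5, hs, hv,
        hne, hxs.symm, hvy⟩
      simp at this

theorem conn_sub {S : Set V} {A : Set S} (h : ConnS G (Subtype.val '' A)) : ConnS (G.induce S) A := by
  intro T hT hne ⟨c, hcA, hcT⟩
  obtain ⟨p, ⟨p', hp', rfl⟩, q, ⟨⟨q', hq', rfl⟩, hq2⟩, e⟩ := h (Subtype.val '' T) (Set.image_mono hT) (hne.image _)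
    ⟨c, ⟨c, hcA, rfl⟩, by rintro ⟨d, hd, e⟩; exact hcT (Subtype.ext e ▸ hd)⟩
  exact ⟨p', hp', q', ⟨hq', fun k => hq2 ⟨q', k, rfl⟩⟩, e⟩

theorem ham_sub {S : Set V} (h : Ham (G.induce S) Set.univ) : Ham G S := by
  obtain ⟨l, h1, h2, h3, h4⟩ := h
  refine ⟨l.map Subtype.val, h1.map Subtype.val_injective, ?_, ?_, ?_⟩
  · intro y
    simp [h2]
  · rw [List.isChain_map]; exact h3
  · intro a ha b hb
    simp only [List.getLast?_map, List.head?_map, Option.mem_def, Option.map_eq_some_iff] at ha hb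
    obtain ⟨a', ha, rfl⟩ := ha
    obtain ⟨b', hb, rfl⟩ := hb
    exact h4 a' ha b' hb

theorem conn_pair {a b : V} (hab : G.Adj a b) : TCS G {a, b} := by
  have h0 : ∀ c : V, ConnS G {c} := by
    intro c T hT ⟨d, hd⟩ ⟨e, he1, he2⟩
    have := hT hd
    simp at this he1
    subst this; subst he1; exact absurd hd he2
  have h1 : ConnS G {b, a} := conn_insert (h0 a) rfl hab
  refine ⟨by rwa [Set.pair_comm], ?_⟩
  rintro v (rfl | rfl)
  · convert h0 b using 1; ext z; simp; rintro rfl; exact hab.ne.symm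
  · convert h0 a using 1; ext z; simp; constructor
    · tauto
    · rintro rfl; exact ⟨Or.inl rfl, hab.ne⟩
end

universe w
theorem main_ind (n : ℕ) : ∀ (V : Type w) [Fintype V] (G : SimpleGraph V), Fintype.card V = n → 2 ≤ n →
    ConnS G Set.univ → (∀ w, ConnS G {w}ᶜ) → CF G → BF G → Ham G Set.univ := by
  induction n using Nat.strong_induction_on with
  | _ n ih =>
  intro V _ G hn h2 hc hc' cf bf
  classical
  obtain ⟨c, d, hcd⟩ := Fintype.exists_pair_of_one_lt_card (α := V) (by omega)
  obtain ⟨a, ha, b, hb, hab⟩ := hc {c} (by simp) ⟨c, rfl⟩ ⟨d, by simpa using hcd.symm⟩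
  by_cases hab2 : ∀ z, z = a ∨ z = b
  · refine ⟨[a, b], by simpa using hab.ne, by simpa using hab2, by simpa using hab, ?_⟩
    simpa using hab.symm
  push Not at hab2
  obtain ⟨z, hza, hzb⟩ := hab2
  let F : Finset (Finset V) := Finset.univ.filter (fun S => S ≠ Finset.univ ∧ 2 ≤ S.card ∧ TCS G (S : Set V))
  have hF : ({a, b} : Finset V) ∈ F := by
    simp only [F, Finset.mem_filter, Finset.mem_univ, true_and]
    refine ⟨fun e => ?_, by rw [Finset.card_pair hab.ne], by simpa using conn_pair hab⟩
    have : z ∈ ({a, b} : Finset V) := e ▸ Finset.mem_univ z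
    simp at this; tauto
  obtain ⟨S, hSF, hSmax⟩ := Finset.exists_max_image F Finset.card ⟨_, hF⟩
  simp only [F, Finset.mem_filter, Finset.mem_univ, true_and] at hSF hSmax
  obtain ⟨hS1, hS2, hS3⟩ := hSF
  have hlt : S.card < n := by
    rw [← hn]; exact Finset.card_lt_univ_of_notMem (x := _) (Classical.not_forall.1 (fun k => hS1 (Finset.eq_univ_iff_forall.2 k))).choose_spec
  have hH : Ham G (S : Set V) := by
    apply ham_sub
    refine ih S.card hlt _ _ (by simp) hS2 (conn_sub ?_) (fun w => conn_sub ?_) ?_ ?_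
    · simpa using hS3.1
    · convert hS3.2 w w.2 using 1
      ext y
      constructor
      · rintro ⟨y', hy', rfl⟩
        exact ⟨y'.2, fun k => hy' (Subtype.ext k)⟩
      · rintro ⟨h1, h2⟩
        exact ⟨⟨y, h1⟩, fun k => h2 (congrArg Subtype.val k), rfl⟩
    · intro c a b d h1 h2 h3 h4 h5 h6
      exact cf c a b d h1 h2 h3 (Subtype.coe_ne_coe.2 h4) (Subtype.coe_ne_coe.2 h5) (Subtype.coe_ne_coe.2 h6)
    · intro t0 t1 t2 a b c
      exact bf t0 t1 t2 a b c
  obtain ⟨p, hp, q, hq, hpq⟩ := Finset.one_lt_card.1 (show 1 < S.card by omega)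
  obtain ⟨r, hr⟩ := Classical.not_forall.1 (fun k => hS1 (Finset.eq_univ_iff_forall.2 k))
  refine ear_ham cf bf hc hc' hS3 hH ?_ (a := p) (b := q) (c := r) (by simpa using hp) (by simpa using hq) hpq (by simpa using hr)
  intro S' hsub hne ht
  by_contra hu
  have hlt : S.card < S'.toFinset.card := by
    apply Finset.card_lt_card
    rw [Finset.ssubset_iff_subset_ne]
    refine ⟨by intro y hy; simpa using hsub (by simpa using hy), fun e => hne (by rw [e]; simp)⟩
  have := hSmax S'.toFinset ⟨fun e => hu (by simpa using e), by omega, by simpa using ht⟩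
  omega

theorem conn_of {V : Type*} {G : SimpleGraph V} {A : Set V} (h : (G.induce A).Preconnected) : ConnS G A := by
  intro T hT ⟨a, ha⟩ ⟨b, hbA, hbT⟩
  obtain ⟨p⟩ := h ⟨a, hT ha⟩ ⟨b, hbA⟩
  obtain ⟨d, hd, h1, h2⟩ := p.exists_boundary_dart {y | y.1 ∈ T} ha hbT
  exact ⟨d.fst.1, h1, d.snd.1, ⟨d.snd.2, h2⟩, d.adj⟩

theorem conn_univ {V : Type*} [Fintype V] {G : SimpleGraph V} (h3 : 3 ≤ Fintype.card V)
    (h : ∀ w, ConnS G {w}ᶜ) : ConnS G Set.univ := by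
  classical
  intro T _ ⟨a, ha⟩ ⟨b, _, hb⟩
  obtain ⟨c, hc⟩ : ∃ c, c ∉ ({a, b} : Finset V) := by
    by_contra k
    push Not at k
    have := Finset.card_le_two (a := a) (b := b)
    rw [Finset.eq_univ_iff_forall.2 k, Finset.card_univ] at this
    omega
  simp at hc
  obtain ⟨p, hp, q, hq, e⟩ := h c (T \ {c}) (by intro y hy; exact hy.2) ⟨a, ha, by simpa using Ne.symm hc.1⟩
    ⟨b, by simpa using Ne.symm hc.2, fun k => hb k.1⟩
  exact ⟨p, hp.1, q, ⟨trivial, fun k => hq.2 ⟨k, hq.1⟩⟩, e⟩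

end BW

theorem stmt16 {V : Type*} [Fintype V] [DecidableEq V] (G : SimpleGraph V)
    (h2c : TwoConnected G)
    (hK13 : ¬ ContainsInduced G K13) (hB12 : ¬ ContainsInduced G (Bgraph 2)) :
    HasHamiltonianCycle G := by
  obtain ⟨h3, hconn⟩ := h2c
  have hc' : ∀ w, BW.ConnS G {w}ᶜ := fun w => BW.conn_of (hconn w).preconnected
  exact BW.ham_to_cycle h3 (BW.main_ind _ V G rfl (by omega) (BW.conn_univ h3 hc') hc'
    (BW.cf_of hK13) (BW.bf_of hB12))
end

section
/- For every integer i ≥ 6, every 2-connected fat i-path has a Hamiltonian cycle, and every 2-connected fat i-cycle has a Hamiltonian cycle. -/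
open SimpleGraph

theorem fat_ham_of_list {V : Type*} [Fintype V] [DecidableEq V] (G : SimpleGraph V)
    (hc : 3 ≤ Fintype.card V) (l : List V) (hne : l ≠ []) (hnd : l.Nodup)
    (hch : l.IsChain G.Adj) (hall : ∀ v, v ∈ l)
    (hadj : G.Adj (l.getLast hne) (l.head hne)) : HasHamiltonianCycle G := by
  have hlen : l.length = Fintype.card V := by
    rw [← List.toFinset_card_of_nodup hnd, ← Finset.card_univ]
    congr 1
    ext v
    simp [hall]
  refine ⟨_, Walk.cons hadj (Walk.ofSupport l hne hch), ?_⟩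
  rw [Walk.isHamiltonianCycle_iff_isCycle_and_length_eq]
  have hL : (Walk.cons hadj (Walk.ofSupport l hne hch)).length = Fintype.card V := by
    rw [Walk.length_cons, Walk.length_ofSupport]
    omega
  refine ⟨?_, hL⟩
  rw [Walk.isCycle_iff_isPath_tail_and_le_length]
  refine ⟨?_, by omega⟩
  rw [Walk.isPath_def, Walk.support_tail_of_not_nil _ Walk.not_nil_cons, Walk.support_cons,
    List.tail_cons, Walk.support_ofSupport]
  exact hnd

theorem fat_list {V : Type*} [Fintype V] [DecidableEq V] (G : SimpleGraph V)
    (m : ℕ) (g : V → ℕ) (hs : ∀ j, j < m → ∃ v, g v = j)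
    (h0 : ∀ u v, u ≠ v → g u = g v → G.Adj u v)
    (h1 : ∀ u v, g u + 1 = g v → G.Adj u v) (k : ℕ) (hk : k < m) :
    ∃ (l : List V) (hne : l ≠ []), l.Nodup ∧ l.IsChain G.Adj ∧ (∀ v, v ∈ l ↔ g v ≤ k) ∧
      g (l.head hne) = 0 ∧ g (l.getLast hne) = k := by
  have key : ∀ j, j < m → ∃ (l : List V), l ≠ [] ∧ l.Nodup ∧ l.IsChain G.Adj ∧
      (∀ v, v ∈ l ↔ g v = j) := by
    intro j hj
    refine ⟨(Finset.univ.filter (fun v => g v = j)).toList, ?_, Finset.nodup_toList _, ?_, ?_⟩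
    · obtain ⟨v, hv⟩ := hs j hj
      exact List.ne_nil_of_mem (a := v) (by simp [hv])
    · apply List.Pairwise.isChain
      have := Finset.nodup_toList (Finset.univ.filter (fun v => g v = j))
      refine List.Pairwise.imp_of_mem ?_ this
      intro a b ha hb hab
      simp at ha hb
      exact h0 a b hab (by omega)
    · simp
  induction k with
  | zero =>
    obtain ⟨l, hne, hn, hc, hm⟩ := key 0 hk
    refine ⟨l, hne, hn, hc, by simpa using hm, ?_, ?_⟩
    · exact (hm _).1 (List.head_mem hne)
    · exact (hm _).1 (List.getLast_mem hne)
  | succ k ih =>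
    obtain ⟨l, hne, hn, hc, hm, hh, hl⟩ := ih (by omega)
    obtain ⟨l', hne', hn', hc', hm'⟩ := key (k+1) hk
    refine ⟨l ++ l', by simp [hne], ?_, ?_, ?_, ?_, ?_⟩
    · refine List.Nodup.append hn hn' ?_
      intro a ha ha'
      rw [hm] at ha
      rw [hm'] at ha'
      omega
    · rw [List.isChain_append]
      refine ⟨hc, hc', ?_⟩
      intro x hx y hy
      rw [List.getLast?_eq_some_getLast hne] at hx
      have hy' := (hm' y).1 (List.mem_of_mem_head? hy)
      apply h1
      simp at hx
      subst hx
      omega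
    · intro v
      rw [List.mem_append, hm, hm']
      omega
    · rw [List.head_append_of_ne_nil hne]; exact hh
    · rw [List.getLast_append_of_ne_nil _ hne']
      exact (hm' _).1 (List.getLast_mem hne')

theorem fat_ham {V : Type*} [Fintype V] [DecidableEq V] (G : SimpleGraph V)
    (hc : 3 ≤ Fintype.card V)
    (m : ℕ) (hm : 0 < m) (g : V → ℕ) (hg : ∀ v, g v < m) (hs : ∀ j, j < m → ∃ v, g v = j)
    (h0 : ∀ u v, u ≠ v → g u = g v → G.Adj u v)
    (h1 : ∀ u v, g u + 1 = g v → G.Adj u v)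
    (h2 : ∀ u v, g u + 1 = m → g v = 0 → G.Adj u v) : HasHamiltonianCycle G := by
  obtain ⟨l, hne, hn, hch, hmem, hh, hl⟩ := fat_list G m g hs h0 h1 (m-1) (by omega)
  refine fat_ham_of_list G hc l hne hn hch (fun v => ?_) (h2 _ _ (by omega) hh)
  rw [hmem]
  have := hg v
  omega

theorem fat_path_two {V : Type*} [Fintype V] [DecidableEq V] (G : SimpleGraph V)
    (h2c : TwoConnected G) (l : ℕ) (f : V → ℕ)
    (hs : ∀ j, j < l → ∃ v, f v = j)
    (ha : ∀ u v, G.Adj u v → f u = f v ∨ f u + 1 = f v ∨ f v + 1 = f u)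
    (c : V) (hc0 : 0 < f c) (hcl : f c + 1 < l) : ∃ w, w ≠ c ∧ f w = f c := by
  by_contra hno
  push Not at hno
  obtain ⟨u, hu⟩ := hs 0 (by omega)
  obtain ⟨v, hv⟩ := hs (f c + 1) hcl
  have huc : u ≠ c := by rintro rfl; omega
  have hvc : v ≠ c := by rintro rfl; omega
  have hr := (h2c.2 c).preconnected ⟨u, huc⟩ ⟨v, hvc⟩
  obtain ⟨p⟩ := hr
  have : ∀ (x y : ({c}ᶜ : Set V)) (p : (G.induce ({c}ᶜ : Set V)).Walk x y),
      f x < f c → f y < f c := by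
    intro x y p
    induction p with
    | nil => exact id
    | @cons a b d h p ih =>
      intro hlt
      apply ih
      have h1 := ha _ _ (show G.Adj a b from h)
      have h2 := hno b b.2
      omega
  have := this _ _ p (by simpa [hu] using hc0)
  simp at this
  omega

/-- **(Statement 17.)** For every integer `i ≥ 6`, every 2-connected fat `i`-path has a
Hamiltonian cycle, and every 2-connected fat `i`-cycle has a Hamiltonian cycle. -/
theorem stmt17 {V : Type*} [Fintype V] [DecidableEq V] (i : ℕ) (hi : 6 ≤ i)
    (G : SimpleGraph V) (h2c : TwoConnected G)
    (hG : IsFatPath G i ∨ IsFatCycle G i) :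
    HasHamiltonianCycle G := by
  have h3 := h2c.1
  rcases hG with ⟨_, L, ⟨hne, hdis, hadj⟩, hcov⟩ | ⟨_, L, ⟨hne, hdis, hadj⟩, hcov⟩
  · choose F hF using hcov
    have huniq : ∀ v j, v ∈ L j → F v = j := by
      intro v j hv
      by_contra hne'
      exact Set.disjoint_left.1 (hdis _ _ hne') (hF v) hv
    have hA : ∀ u v, u ≠ v → (G.Adj u v ↔ (F u : ℕ) = F v ∨ (F u : ℕ) + 1 = F v ∨
        (F v : ℕ) + 1 = F u) := by
      intro u v huv
      rw [hadj _ _ u v (hF u) (hF v) huv, Fin.ext_iff]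
    have hs : ∀ j, j < i → ∃ v, (F v : ℕ) = j := by
      intro j hj
      obtain ⟨v, hv⟩ := hne ⟨j, hj⟩
      exact ⟨v, by rw [huniq v _ hv]⟩
    have hs' : ∀ j, ∃ v, j < i → (F v : ℕ) = j := by
      intro j
      by_cases hj : j < i
      · obtain ⟨v, hv⟩ := hs j hj
        exact ⟨v, fun _ => hv⟩
      · obtain ⟨v, hv⟩ := hs 0 (by omega)
        exact ⟨v, fun h => absurd h hj⟩
    choose c hc using hs'
    have hlt : ∀ v, (F v : ℕ) < i := fun v => (F v).2
    let g : V → ℕ := fun v => if (F v : ℕ) = 0 ∨ (F v : ℕ) + 1 = i ∨ v = c (F v) then (F v : ℕ)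
      else 2 * i - 2 - F v
    have hg1 : ∀ v, (g v = F v) ∨ (0 < (F v : ℕ) ∧ (F v : ℕ) + 1 < i ∧
        g v = 2 * i - 2 - F v) := by
      intro v
      have := hlt v
      by_cases h : (F v : ℕ) = 0 ∨ (F v : ℕ) + 1 = i ∨ v = c (F v)
      · left; simp only [g, if_pos h]
      · right
        refine ⟨by omega, by omega, ?_⟩
        simp only [g, if_neg h]
    refine fat_ham G h3 (2 * i - 2) (by omega) g ?_ ?_ ?_ ?_ ?_
    · intro v
      have := hlt v
      rcases hg1 v with h | h <;> omega
    · intro j hj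
      by_cases hji : j < i
      · refine ⟨c j, ?_⟩
        have h := hc j hji
        simp only [g, h, or_true, if_true]
      · have hk : 2 * i - 2 - j < i := by omega
        have hck := hc _ hk
        obtain ⟨w, hw, hw'⟩ := fat_path_two G h2c i (fun v => (F v : ℕ)) hs
          (fun u v h => (hA u v h.ne).1 h) (c (2 * i - 2 - j)) (by simp only [hck]; omega)
          (by simp only [hck]; omega)
        simp only [hck] at hw'
        refine ⟨w, ?_⟩
        simp only [g, hw']
        rw [if_neg]
        · omega
        · rintro (h | h | h)
          · omega
          · omega
          · exact hw h
    · intro u v huv h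
      rw [hA u v huv]
      have := hlt u
      have := hlt v
      rcases hg1 u with h' | h' <;> rcases hg1 v with h'' | h'' <;> omega
    · intro u v h
      have huv : u ≠ v := by rintro rfl; omega
      rw [hA u v huv]
      have := hlt u
      have := hlt v
      rcases hg1 u with h' | h' <;> rcases hg1 v with h'' | h'' <;> omega
    · intro u v h h0
      have huv : u ≠ v := by rintro rfl; omega
      rw [hA u v huv]
      have := hlt u
      have := hlt v
      rcases hg1 u with h' | h' <;> rcases hg1 v with h'' | h'' <;> omega
  · choose F hF using hcov
    have huniq : ∀ v j, v ∈ L j → F v = j := by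
      intro v j hv
      by_contra hne'
      exact Set.disjoint_left.1 (hdis _ _ hne') (hF v) hv
    have hA := fun u v huv => (hadj _ _ u v (hF u) (hF v) huv).2
    refine fat_ham G h3 (i + 1) (by omega) (fun v => (F v : ℕ)) (fun v => (F v).2) ?_ ?_ ?_ ?_
    · intro j hj
      obtain ⟨v, hv⟩ := hne ⟨j, hj⟩
      exact ⟨v, by simp only [huniq v _ hv]⟩
    · intro u v huv h
      exact hA u v huv (Or.inl (Fin.ext h))
    · intro u v h
      refine hA u v (by rintro rfl; omega) (Or.inr (Or.inl ?_))
      rw [h, Nat.mod_eq_of_lt (F v).2]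
    · intro u v h h0
      refine hA u v (by rintro rfl; omega) (Or.inr (Or.inl ?_))
      rw [h, h0, Nat.mod_self]
end

section
/- Let m ≥ 1 be an integer and set p = max{3m, m+4}. Then every graph in P(p) is {K_{1,3}, B_{1,m}}-free and contains P_p as an induced subgraph. -/
open SimpleGraph

set_option maxHeartbeats 4000000 in
theorem fat_aux {V : Type*} (G : SimpleGraph V) (n p m : ℕ) (hm : 1 ≤ m) (C : Prop)
    (idx : V → ℕ) (hlt : ∀ v, idx v < n) (h5 : 5 ≤ n) (hp : p ≤ n) (hC : C → p + 1 ≤ n)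
    (hne : ∀ i, i < n → ∃ v, idx v = i)
    (hadj : ∀ u v, u ≠ v → (G.Adj u v ↔ (idx u = idx v ∨ idx u + 1 = idx v ∨ idx v + 1 = idx u ∨
      (C ∧ ((idx u = 0 ∧ idx v + 1 = n) ∨ (idx v = 0 ∧ idx u + 1 = n)))))) :
    ¬ ContainsInduced G K13 ∧ ¬ ContainsInduced G (Bgraph m) ∧
      ContainsInduced G (SimpleGraph.pathGraph p) := by
  refine ⟨?_, ?_, ?_⟩
  · rintro ⟨f⟩
    have key : ∀ a b : Fin 4, a ≠ b → (K13.Adj a b ↔ _) :=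
      fun a b hab => (f.map_adj_iff (v := a) (w := b)).symm.trans
        (hadj (f a) (f b) (fun h => hab (f.injective h)))
    have h01 := (key 0 1 (by decide)).1 (by simp [K13, graphOfList])
    have h02 := (key 0 2 (by decide)).1 (by simp [K13, graphOfList])
    have h03 := (key 0 3 (by decide)).1 (by simp [K13, graphOfList])
    have h12 := (not_congr (key 1 2 (by decide))).1 (by simp [K13, graphOfList])
    have h13 := (not_congr (key 1 3 (by decide))).1 (by simp [K13, graphOfList])
    have h23 := (not_congr (key 2 3 (by decide))).1 (by simp [K13, graphOfList])
    have l0 := hlt (f 0)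
    have l1 := hlt (f 1)
    have l2 := hlt (f 2)
    have l3 := hlt (f 3)
    generalize idx (f 0) = x0 at *
    generalize idx (f 1) = x1 at *
    generalize idx (f 2) = x2 at *
    generalize idx (f 3) = x3 at *
    clear key hadj hne hlt
    by_cases c : C <;> simp only [c, true_and, false_and, or_false] at h01 h02 h03 h12 h13 h23 <;>
      omega
  · rintro ⟨f⟩
    have key : ∀ a b : Fin (m + 4), a ≠ b → ((Bgraph m).Adj a b ↔ _) :=
      fun a b hab => (f.map_adj_iff (v := a) (w := b)).symm.trans
        (hadj (f a) (f b) (fun h => hab (f.injective h)))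
    let v0 : Fin (m + 4) := ⟨0, by omega⟩
    let v1 : Fin (m + 4) := ⟨1, by omega⟩
    let v2 : Fin (m + 4) := ⟨2, by omega⟩
    let v3 : Fin (m + 4) := ⟨3, by omega⟩
    let v4 : Fin (m + 4) := ⟨4, by omega⟩
    have h01 := (key v0 v1 (by simp [v0, v1])).1 (by simp [Bgraph, v0, v1])
    have h02 := (key v0 v2 (by simp [v0, v2])).1 (by simp [Bgraph, v0, v2])
    have h12 := (key v1 v2 (by simp [v1, v2])).1 (by simp [Bgraph, v1, v2])
    have h03 := (key v0 v3 (by simp [v0, v3])).1 (by simp [Bgraph, v0, v3])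
    have h14 := (key v1 v4 (by simp [v1, v4])).1 (by simp [Bgraph, v1, v4])
    have h13 := (not_congr (key v1 v3 (by simp [v1, v3]))).1 (by simp [Bgraph, v1, v3])
    have h23 := (not_congr (key v2 v3 (by simp [v2, v3]))).1 (by simp [Bgraph, v2, v3])
    have h04 := (not_congr (key v0 v4 (by simp [v0, v4]))).1 (by simp [Bgraph, v0, v4])
    have h24 := (not_congr (key v2 v4 (by simp [v2, v4]))).1 (by simp [Bgraph, v2, v4])
    have l0 := hlt (f v0)
    have l1 := hlt (f v1)
    have l2 := hlt (f v2)
    have l3 := hlt (f v3)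
    have l4 := hlt (f v4)
    generalize idx (f v0) = x0 at *
    generalize idx (f v1) = x1 at *
    generalize idx (f v2) = x2 at *
    generalize idx (f v3) = x3 at *
    generalize idx (f v4) = x4 at *
    clear key hadj hne hlt
    simp only [not_or] at h13 h23 h04 h24
    clear f
    by_cases c : C <;> simp only [c, true_and, false_and, not_false_eq_true, and_true] at h13 h23 h04 h24 h01 h02 h03 h12 h14 <;>
      rcases h01 with h01 | h01 | h01 | h01 <;> (try omega) <;>
      rcases h03 with h03 | h03 | h03 | h03 <;> (try omega) <;>
      rcases h14 with h14 | h14 | h14 | h14 <;> (try omega) <;>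
      rcases h02 with h02 | h02 | h02 | h02 <;> omega
  · haveI : Nonempty V := ⟨(hne 0 (by omega)).choose⟩
    choose! g hg using hne
    have hg' : ∀ a : Fin p, idx (g a) = a := fun a => hg a (by omega)
    have inj : Function.Injective (fun a : Fin p => g a) := by
      intro a b h
      have := congrArg idx h
      simp only [hg'] at this
      exact Fin.ext this
    refine ⟨⟨⟨_, inj⟩, ?_⟩⟩
    intro a b
    simp only [Function.Embedding.coeFn_mk, SimpleGraph.pathGraph_adj]
    by_cases hab : a = b
    · subst hab
      simp
    · rw [hadj _ _ (fun h => hab (inj h)), hg', hg']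
      have h1 : (a : ℕ) ≠ b := fun h => hab (Fin.ext h)
      by_cases c : C
      · have := hC c
        simp only [c, true_and]
        omega
      · simp only [c, false_and, or_false]
        omega

/-- **(Statement 19.)** Let `m ≥ 1` and `p = max{3m, m+4}`.  Every graph in `𝒫(p)` is
`{K_{1,3}, B_{1,m}}`-free and contains `P_p` as an induced subgraph. -/
theorem stmt19 {V : Type*} [Fintype V] (m : ℕ) (hm : 1 ≤ m) (G : SimpleGraph V)
    (hG : MemFatFamily G (max (3 * m) (m + 4))) :
    ¬ ContainsInduced G K13 ∧ ¬ ContainsInduced G (Bgraph m) ∧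
      ContainsInduced G (SimpleGraph.pathGraph (max (3 * m) (m + 4))) := by
  obtain ⟨l, hl, ⟨h5, L, ⟨hne, hd, hadj⟩, hcov⟩ | ⟨h5, L, ⟨hne, hd, hadj⟩, hcov⟩⟩ := hG
  · choose idx hidx using hcov
    refine fat_aux G l _ m hm False (fun v => (idx v : ℕ)) (fun v => (idx v).2) h5 hl
      (fun h => h.elim) ?_ ?_
    · intro i hi
      obtain ⟨v, hv⟩ := hne ⟨i, hi⟩
      refine ⟨v, ?_⟩
      by_contra hh
      exact Set.disjoint_left.1 (hd (idx v) ⟨i, hi⟩ (fun e => hh (by simp [e]))) (hidx v) hv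
    · intro u v huv
      rw [hadj _ _ u v (hidx u) (hidx v) huv, Fin.ext_iff]
      simp
  · choose idx hidx using hcov
    refine fat_aux G (l + 1) _ m hm True (fun v => (idx v : ℕ)) (fun v => (idx v).2) (by omega)
      (by omega) (fun _ => by omega) ?_ ?_
    · intro i hi
      obtain ⟨v, hv⟩ := hne ⟨i, hi⟩
      refine ⟨v, ?_⟩
      by_contra hh
      exact Set.disjoint_left.1 (hd (idx v) ⟨i, hi⟩ (fun e => hh (by simp [e]))) (hidx v) hv
    · have hmod : ∀ a b : ℕ, a < l + 1 → b < l + 1 →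
          ((a + 1) % (l + 1) = b ↔ a + 1 = b ∨ (b = 0 ∧ a + 1 = l + 1)) := by
        intro a b ha hb
        rcases Nat.lt_or_ge (a + 1) (l + 1) with h | h
        · rw [Nat.mod_eq_of_lt h]; omega
        · have : a + 1 = l + 1 := by omega
          rw [this, Nat.mod_self]; omega
      intro u v huv
      rw [hadj _ _ u v (hidx u) (hidx v) huv, Fin.ext_iff, hmod _ _ (idx u).2 (idx v).2,
        hmod _ _ (idx v).2 (idx u).2]
      simp only [true_and]
      tauto
end
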